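/- arXiv:2004.03312 — 2 statements merged into one kernel-verified Lean document; each statement's English description precedes it below -/
import Mathlib

section
/- Let f : J → ℝ be a continuous function on an interval J that is operator convex, let Φ : B(H) → B(K) be a unital positive linear map, and let A ∈ B(H) be a self-adjoint operator with spectrum contained in J. Then f(Φ(A)) ≤ Φ(f(A)) in the Loewner order (Choi–Davis inequality). -/
/-!
The idea is to replace `Φ` and the functional calculus of `A` by a finite positive operator-valued
measure and to prove Jensen's inequality for the latter on finite-dimensional spaces.

Take a partition of unity `φ i` on the spectrum of `A` with nodes `t i` and `∑ t i φ i = id`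
(`exists_barycentric_partition`). The operators `E i = Φ (φ i (A)) ≥ 0` sum to `1` and
satisfy `∑ t i E i = Φ A`, while `∑ f (t i) E i` is close to `Φ (f A)` because `Φ` is monotone. To
evaluate `⟪x, f (Φ A) x⟫`, take a second partition of unity `ψ k` on the spectrum of `S = Φ A`, with
nodes `s k`; then `∑ f (s k) ⟪x, ψ k (S) x⟫` is close to it. The Gram matrices
`⟪ψ k (S) x, E i (ψ j (S) x)⟫` are positive semidefinite, so they have a finite-dimensional dilation,
on which operator convexity at the midpoint gives Jensen's inequality through the reflection
`2 P - 1` in a subspace (`jensen_eigenvectors`, `jensen_matrix`).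

That argument requires the vectors involved to be exact eigenvectors of a compression, whereas
`ψ k (S) x` is only an approximate one. The defect is removed by shrinking all masses by the factor
`1 - η` and adding two positive semidefinite masses at the extreme points `a`, `b` of the spectrum of
`A` (`jensen_discrete`). Positivity of these masses is diagonal dominance, since products of the
`ψ k` have nonnegative spectral integrals. The added masses have total size `η ‖x‖²`, so only the
values `f a` and `f b` enter the error, and `η → 0` gives the inequality whenever `f` is continuous on
the spectrum of `Φ A`.

The set `J` is arbitrary, and the spectrum of `Φ A` need only lie in its convex hull. If `f` is
discontinuous there, then `f (Φ A) = 0` by the convention for the functional calculus, and `f ≥ 0` on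
`J` has to be shown (`nonneg_of_not_continuousOn`). This follows from operator convexity for two
operators with three-point spectra in `J` whose mean has in its spectrum a set on which `f` is
discontinuous, so that the left side of the convexity inequality is also `0`.
-/

open scoped ComplexInnerProductSpace

universe u

/-! ### Eigenvectors and compressions -/

/-- Operator convexity of `f` on `J`, tested on the Hilbert spaces of one universe. -/
def OperatorConvexOn (J : Set ℝ) (f : ℝ → ℝ) : Prop :=
  ∀ (E : Type u) [NormedAddCommGroup E] [InnerProductSpace ℂ E] [CompleteSpace E],
    ∀ A B : E →L[ℂ] E, IsSelfAdjoint A → IsSelfAdjoint B →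
      spectrum ℝ A ⊆ J → spectrum ℝ B ⊆ J → ∀ v : ℝ, 0 < v → v < 1 →
        cfc f ((1 - v) • A + v • B) ≤ (1 - v) • cfc f A + v • cfc f B

lemma mem_spectrum_of_apply_eq_smul {E : Type*} [NormedAddCommGroup E] [InnerProductSpace ℂ E]
    {Y : E →L[ℂ] E} {s : ℝ} {v : E} (hv : Y v = s • v) (h0 : v ≠ 0) : s ∈ spectrum ℝ Y := by
  intro hu
  apply h0
  have h1 : (algebraMap ℝ (E →L[ℂ] E) s - Y) v = 0 := by
    simp [hv, Algebra.algebraMap_eq_smul_one]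
  obtain ⟨w, hw⟩ := hu
  have : (↑w⁻¹ * ↑w : E →L[ℂ] E) v = 0 := by
    rw [hw, mul_apply_eq_comp, h1, map_zero]
  simpa using this

/-- Without any continuity of `f`: on a finite spectrum `f` agrees with an interpolation
polynomial. -/
lemma cfc_apply_eigenvector {E : Type*} [NormedAddCommGroup E] [InnerProductSpace ℂ E]
    [CompleteSpace E] (f : ℝ → ℝ) (Y : E →L[ℂ] E) (hY : IsSelfAdjoint Y)
    (hfin : (spectrum ℝ Y).Finite) {s : ℝ} {v : E} (hv : Y v = s • v) :
    cfc f Y v = f s • v := by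
  by_cases h0 : v = 0
  · simp [h0]
  have hs : s ∈ spectrum ℝ Y := mem_spectrum_of_apply_eq_smul hv h0
  classical
  obtain ⟨q, hqe⟩ : ∃ q : Polynomial ℝ, ∀ x ∈ spectrum ℝ Y, f x = q.eval x := by
    refine ⟨Lagrange.interpolate hfin.toFinset id f, fun x hx => ?_⟩
    exact (Lagrange.eval_interpolate_at_node (s := hfin.toFinset) (v := id) f
      (fun _ _ _ _ h => h) (by simpa using hx)).symm
  rw [cfc_congr hqe, cfc_polynomial q Y, hqe s hs]
  clear hqe
  induction q using Polynomial.induction_on' with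
  | add p q hp hq => simp [add_smul, hp, hq]
  | monomial n a =>
    have : ∀ n : ℕ, (Y ^ n) v = s ^ n • v := by
      intro n
      induction n with
      | zero => simp
      | succ n ih => rw [pow_succ', mul_apply_eq_comp, ih]; simp [hv, smul_smul, pow_succ]
    simp [Polynomial.aeval_monomial, this, Algebra.algebraMap_eq_smul_one, smul_smul]

lemma finite_spectrum_real {E : Type*} [NormedAddCommGroup E] [InnerProductSpace ℂ E]
    [FiniteDimensional ℂ E] (Y : E →L[ℂ] E) : (spectrum ℝ Y).Finite := by
  have h : Function.Injective (fun r : ℝ => (r:ℂ)) := Complex.ofReal_injective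
  have h2 : (spectrum ℂ (Y : E →ₗ[ℂ] E)).Finite := Module.End.finite_spectrum (Y : E →ₗ[ℂ] E)
  refine (h2.preimage h.injOn).subset ?_
  intro r hr hu
  apply hr
  have := hu.map (Module.End.toContinuousLinearMap (𝕜 := ℂ) E)
  change IsUnit (algebraMap ℝ (E →L[ℂ] E) r - Y)
  convert this using 1
  ext x
  change _ = ((r : ℂ) • x : E) - Y x
  simp [Algebra.algebraMap_eq_smul_one]

/-- Jensen's inequality for the compression of `T` to the span `M` of the `v j`, at the vector
`x = ∑ u i = ∑ v j`. The hypothesis `hv` says that `v j` is an eigenvector of the compression with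
eigenvalue `s j`, so the two sides are `⟪x, f (P T P) x⟫` and `⟪x, f T x⟫`.

Midpoint convexity suffices: for the reflection `U = 2 P - 1` the mean of `T` and `U T U` restricts
to the compression on `M`, and `f (U T U) = U f(T) U` has the same diagonal value at `x ∈ M`. -/
lemma jensen_eigenvectors
    {J : Set ℝ} {f : ℝ → ℝ} (hopconv : OperatorConvexOn.{u} J f)
    {E : Type u} [NormedAddCommGroup E] [InnerProductSpace ℂ E] [CompleteSpace E]
    [FiniteDimensional ℂ E] (T : E →L[ℂ] E) (hT : IsSelfAdjoint T) (hTJ : spectrum ℝ T ⊆ J)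
    {ι κ : Type*} [Fintype ι] [Fintype κ] (u : ι → E) (t : ι → ℝ) (hu : ∀ i, T (u i) = t i • u i)
    (v : κ → E) (s : κ → ℝ) (hv : ∀ k j, ⟪v k, T (v j)⟫ = (s j : ℂ) * ⟪v k, v j⟫)
    (huv : ∑ i, u i = ∑ j, v j) :
    (⟪∑ j, v j, ∑ j, f (s j) • v j⟫).re ≤ (⟪∑ i, u i, ∑ i, f (t i) • u i⟫).re := by
  set M : Submodule ℂ E := Submodule.span ℂ (Set.range v)
  set U : E →L[ℂ] E := (2 : ℂ) • M.starProjection - 1 with hU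
  have hPsa : IsSelfAdjoint M.starProjection := isSelfAdjoint_starProjection M
  have hUsa : IsSelfAdjoint U := by
    rw [hU]
    refine IsSelfAdjoint.sub (IsSelfAdjoint.smul ?_ hPsa) (.one _)
    simp
  have hUU : U * U = 1 := by
    have := M.isIdempotentElem_starProjection.eq
    rw [hU]
    simp only [sub_mul, mul_sub, smul_mul_assoc, mul_smul_comm, this, mul_one, one_mul]
    module
  have hUM : ∀ x ∈ M, U x = x := by
    intro x hx
    have := Submodule.starProjection_eq_self_iff.2 hx
    simp [hU, this, two_smul]
  have hvM : ∀ j, v j ∈ M := fun j => Submodule.subset_span ⟨j, rfl⟩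
  set B := U * T * U with hB
  have hBsa : IsSelfAdjoint B := by
    simpa [hUsa.star_eq] using hT.conjugate U
  have hBJ : spectrum ℝ B ⊆ J := by
    have := spectrum.units_conjugate (R := ℝ) (a := T) (u := ⟨U, U, hUU, hUU⟩)
    exact (this.trans_subset hTJ)
  have hPT : ∀ j, M.starProjection (T (v j)) = s j • v j := by
    intro j
    apply Submodule.eq_starProjection_of_mem_of_inner_eq_zero
    · rw [← Complex.coe_smul]
      exact M.smul_mem _ (hvM j)
    · intro w hw
      induction hw using Submodule.span_induction with
      | mem x hx =>
        obtain ⟨k, rfl⟩ := hx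
        rw [← inner_conj_symm, inner_sub_right, hv, ← Complex.coe_smul, inner_smul_right]
        simp
      | zero => simp
      | add x y _ _ hx hy => rw [inner_add_right, hx, hy, add_zero]
      | smul a x _ hx => rw [inner_smul_right, hx, mul_zero]
  have key := hopconv E T B hT hBsa hTJ hBJ (1 / 2) (by norm_num) (by norm_num)
  set Y : E →L[ℂ] E := (1 - 1 / 2 : ℝ) • T + (1 / 2 : ℝ) • B with hY
  have hYsa : IsSelfAdjoint Y := (IsSelfAdjoint.smul (.all _) hT).add
    (IsSelfAdjoint.smul (.all _) hBsa)
  have hYv : ∀ j, Y (v j) = s j • v j := by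
    intro j
    have : Y (v j) = M.starProjection (T (v j)) := by
      simp only [hY, hB, add_apply, smul_apply, mul_apply_eq_comp, hUM _ (hvM j)]
      simp only [hU, sub_apply, smul_apply, one_apply_eq_self]
      rw [← Complex.coe_smul, ← Complex.coe_smul]
      push_cast
      module
    rw [this, hPT]
  have hfv : cfc f Y (∑ j, v j) = ∑ j, f (s j) • v j := by
    rw [map_sum]
    exact Finset.sum_congr rfl fun j _ =>
      cfc_apply_eigenvector f Y hYsa (finite_spectrum_real Y) (hYv j)
  have hfu : cfc f T (∑ i, u i) = ∑ i, f (t i) • u i := by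
    rw [map_sum]
    exact Finset.sum_congr rfl fun j _ =>
      cfc_apply_eigenvector f T hT (finite_spectrum_real T) (hu j)
  have hxM : ∑ j, v j ∈ M := M.sum_mem fun j _ => hvM j
  have hBu : cfc f B (∑ i, u i) = U (∑ i, f (t i) • u i) := by
    conv_lhs => rw [← hUM (∑ i, u i) (huv ▸ hxM)]
    rw [map_sum, map_sum, map_sum]
    refine Finset.sum_congr rfl fun j _ => ?_
    rw [cfc_apply_eigenvector f B hBsa (finite_spectrum_real B) (s := t j)]
    · rw [← Complex.coe_smul, ← Complex.coe_smul, map_smul U]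
    · have : U (U (u j)) = u j := by rw [← mul_apply_eq_comp, hUU]; rfl
      simp only [hB, mul_apply_eq_comp, this, hu]
      rw [← Complex.coe_smul, map_smul U, Complex.coe_smul]
  have h1 := ((ContinuousLinearMap.le_def _ _).1 key).re_inner_nonneg_right (∑ j, v j)
  have hUin : ⟪∑ i, u i, U (∑ i, f (t i) • u i)⟫ = ⟪∑ i, u i, ∑ i, f (t i) • u i⟫ := by
    rw [← ContinuousLinearMap.adjoint_inner_left, ← ContinuousLinearMap.star_eq_adjoint,
      hUsa.star_eq, hUM _ (huv ▸ hxM)]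
  simp only [sub_apply, add_apply, smul_apply] at h1
  rw [hfv, ← huv, hfu, hBu, inner_sub_right, inner_add_right, ← Complex.coe_smul,
    ← Complex.coe_smul, inner_smul_right, inner_smul_right, hUin] at h1
  rw [← huv]
  simp only [map_sub, map_add, RCLike.re_to_complex, Complex.re_ofReal_mul] at h1
  linarith

/-! ### Finite matrix-valued measures -/

open scoped ComplexOrder MatrixOrder Matrix.Norms.L2Operator in
lemma exists_eq_conjTranspose_mul_self {κ : Type*} [Fintype κ] [DecidableEq κ]
    {G : Matrix κ κ ℂ} (hG : G.PosSemidef) : ∃ X : Matrix κ κ ℂ, G = X.conjTranspose * X :=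
  CStarAlgebra.nonneg_iff_eq_star_mul_self.mp hG.nonneg

open scoped ComplexOrder in
/-- Jensen's inequality for a finite matrix-valued measure with masses `G i` at the points `t i`,
evaluated at the all-ones vector. The hypothesis `hts` says that the first moment of the measure
is its total mass times `diagonal s`.

With `G i = X iᴴ * X i`, the column vectors `v j = (X i · j)ᵢ` and the multiplication operator by `t`
satisfy the hypotheses of `jensen_eigenvectors`. -/
lemma jensen_matrix
    {J : Set ℝ} {f : ℝ → ℝ} (hopconv : OperatorConvexOn.{u} J f)
    {ι κ : Type} [Fintype ι] [Fintype κ] (G : ι → Matrix κ κ ℂ) (hG : ∀ i, (G i).PosSemidef)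
    (t : ι → ℝ) (ht : ∀ i, t i ∈ J) (s : κ → ℝ)
    (hts : ∀ k j, ∑ i, (t i : ℂ) * G i k j = s j * ∑ i, G i k j) :
    (∑ k, ∑ j, (f (s j) : ℂ) * ∑ i, G i k j).re ≤
      (∑ i, (f (t i) : ℂ) * ∑ k, ∑ j, G i k j).re := by
  classical
  have hX : ∀ i, ∃ X : Matrix κ κ ℂ, G i = X.conjTranspose * X := fun i =>
    exists_eq_conjTranspose_mul_self (hG i)
  choose X hX using hX
  let T : EuclideanSpace ℂ (ULift.{u} (ι × κ)) →L[ℂ]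
      EuclideanSpace ℂ (ULift.{u} (ι × κ)) := Matrix.toEuclideanCLM (𝕜 := ℂ)
    (Matrix.diagonal fun p : ULift.{u} (ι × κ) => (t p.down.1 : ℂ))
  have hTapp : ∀ (x : EuclideanSpace ℂ (ULift.{u} (ι × κ))) p, T x p = t p.down.1 * x p := by
    intro x p
    simp [T, Matrix.mulVec_diagonal]
  have hT : IsSelfAdjoint T := by
    rw [isSelfAdjoint_iff, ← map_star]
    congr 1
    rw [Matrix.star_eq_conjTranspose, Matrix.diagonal_conjTranspose]
    congr 1
    ext p
    simp
  have hTJ : spectrum ℝ T ⊆ J := by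
    intro r hr
    by_contra hrJ
    apply hr
    have hne : ∀ i, (r : ℂ) - t i ≠ 0 := by
      intro i h
      rw [sub_eq_zero] at h
      exact hrJ (Complex.ofReal_injective h ▸ ht i)
    let D : EuclideanSpace ℂ (ULift.{u} (ι × κ)) →L[ℂ] EuclideanSpace ℂ (ULift.{u} (ι × κ)) :=
      Matrix.toEuclideanCLM (𝕜 := ℂ)
        (Matrix.diagonal fun p : ULift.{u} (ι × κ) => ((r : ℂ) - t p.down.1)⁻¹)
    have hD : ∀ (x : EuclideanSpace ℂ (ULift.{u} (ι × κ))) p,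
        D x p = ((r : ℂ) - t p.down.1)⁻¹ * x p := by
      intro x p
      simp [D, Matrix.mulVec_diagonal]
    have h1 : ∀ (x : EuclideanSpace ℂ (ULift.{u} (ι × κ))) p,
        (algebraMap ℝ (EuclideanSpace ℂ (ULift.{u} (ι × κ)) →L[ℂ]
          EuclideanSpace ℂ (ULift.{u} (ι × κ))) r - T) x p = ((r : ℂ) - t p.down.1) * x p := by
      intro x p
      simp [Algebra.algebraMap_eq_smul_one, hTapp, sub_mul]
    refine ⟨⟨_, D, ?_, ?_⟩, rfl⟩
    · ext x p
      rw [mul_apply_eq_comp, h1, hD, mul_inv_cancel_left₀ (hne _)]; rfl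
    · ext x p
      rw [mul_apply_eq_comp, hD, h1, inv_mul_cancel_left₀ (hne _)]; rfl
  let v : κ → EuclideanSpace ℂ (ULift.{u} (ι × κ)) :=
    fun j => WithLp.toLp 2 fun p => X p.down.1 p.down.2 j
  let w : ι → EuclideanSpace ℂ (ULift.{u} (ι × κ)) := fun i =>
    WithLp.toLp 2 fun p => if p.down.1 = i then ∑ j, X i p.down.2 j else 0
  have hvw : ∑ i, w i = ∑ j, v j := by
    ext p
    simp [v, w, WithLp.ofLp_sum, Finset.sum_apply]
  have hGX : ∀ i k j, G i k j = ∑ l, star (X i l k) * X i l j := by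
    intro i k j
    rw [hX i, Matrix.mul_apply]
    rfl
  have hvv : ∀ k j, ⟪v k, v j⟫ = ∑ i, G i k j := by
    intro k j
    simp only [PiLp.inner_apply, v, hGX]
    rw [← Equiv.ulift.symm.sum_comp, Fintype.sum_prod_type]
    simp [mul_comm]
  have hvT : ∀ k j, ⟪v k, T (v j)⟫ = ∑ i, (t i : ℂ) * G i k j := by
    intro k j
    simp only [PiLp.inner_apply, hTapp, v, hGX]
    rw [← Equiv.ulift.symm.sum_comp, Fintype.sum_prod_type]
    simp only [Finset.mul_sum]
    exact Finset.sum_congr rfl fun _ _ => Finset.sum_congr rfl fun _ _ => by simp; ring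
  have hww : ∀ i, ⟪∑ i, w i, w i⟫ = ∑ k, ∑ j, G i k j := by
    intro i
    rw [hvw, sum_inner]
    refine Finset.sum_congr rfl fun k _ => ?_
    simp only [PiLp.inner_apply, w, v, hGX]
    rw [← Equiv.ulift.symm.sum_comp, Fintype.sum_prod_type, Finset.sum_comm (γ := κ),
      Finset.sum_eq_single i]
    · simp [Finset.sum_mul, mul_comm]
    · intro b _ hb
      simp [hb]
    · simp
  have hwT : ∀ i, T (w i) = t i • w i := by
    intro i
    ext p
    rw [hTapp]
    by_cases h : p.down.1 = i
    · simp [w, h]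
    · simp [w, h]
  have key := jensen_eigenvectors hopconv T hT hTJ w t hwT v s
    (fun k j => by rw [hvT, hvv, hts]) hvw
  convert key using 2
  · rw [sum_inner]
    refine Finset.sum_congr rfl fun k _ => ?_
    rw [inner_sum]
    refine Finset.sum_congr rfl fun j _ => ?_
    rw [← Complex.coe_smul, inner_smul_right, hvv]
  · rw [inner_sum]
    refine Finset.sum_congr rfl fun j _ => ?_
    rw [← Complex.coe_smul, inner_smul_right, hww]

/-! ### Partitions of unity on compact subsets of the line -/

/-- A continuous partition of unity on a compact set `C ⊆ ℝ` whose members are supported in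
intervals of length at most `ε` with endpoints in `C`. -/
lemma exists_fine_partition {C : Set ℝ} (hC : IsCompact C) {ε : ℝ} (hε : 0 < ε) :
    ∃ (κ : Type) (_ : Fintype κ) (ψ : κ → ℝ → ℝ) (p q : κ → ℝ),
      (∀ k, ContinuousOn (ψ k) C) ∧ (∀ k x, 0 ≤ ψ k x) ∧ (∀ x ∈ C, ∑ k, ψ k x = 1) ∧
      (∀ k, p k ∈ C) ∧ (∀ k, q k ∈ C) ∧ (∀ k, q k - p k ≤ ε) ∧
      (∀ k, ∀ x ∈ C, ψ k x ≠ 0 → p k ≤ x ∧ x ≤ q k) := by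
  obtain ⟨N, hNC, hNfin, hN⟩ := hC.finite_cover_balls (half_pos hε)
  let b : ℝ → ℝ → ℝ := fun c x => max 0 (ε / 2 - |x - c|)
  have hb0 : ∀ c x, 0 ≤ b c x := fun c x => le_max_left _ _
  have hbpos : ∀ c x, |x - c| < ε / 2 → 0 < b c x := fun c x h =>
    lt_max_of_lt_right (by linarith)
  have hbne : ∀ c x, b c x ≠ 0 → x ∈ Metric.closedBall c (ε / 2) := by
    intro c x h
    rw [Metric.mem_closedBall, Real.dist_eq]
    by_contra! h'
    exact h (max_eq_left (by linarith))
  have hbc : ∀ c, Continuous (b c) := fun c => by fun_prop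
  have : Fintype N := hNfin.fintype
  have hsum : ∀ x ∈ C, 0 < ∑ k : N, b k x := by
    intro x hx
    obtain ⟨c, hc, hxc⟩ := Set.mem_iUnion₂.1 (hN hx)
    refine Finset.sum_pos' (fun _ _ => hb0 _ _) ⟨⟨c, hc⟩, Finset.mem_univ _, hbpos _ _ ?_⟩
    simpa [Real.dist_eq] using hxc
  have hcomp : ∀ k : N, IsCompact (C ∩ Metric.closedBall (k : ℝ) (ε / 2)) := fun k =>
    hC.inter_right Metric.isClosed_closedBall
  have hne : ∀ k : N, (C ∩ Metric.closedBall (k : ℝ) (ε / 2)).Nonempty := fun k =>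
    ⟨k, hNC k.2, Metric.mem_closedBall_self (by positivity)⟩
  choose p hp using fun k => (hcomp k).exists_isLeast (hne k)
  choose q hq using fun k => (hcomp k).exists_isGreatest (hne k)
  refine ⟨N, inferInstance, fun k x => b k x / ∑ l : N, b l x, p, q, ?_, ?_, ?_,
    fun k => (hp k).1.1, fun k => (hq k).1.1, ?_, ?_⟩
  · intro k
    refine (hbc k).continuousOn.div ?_ fun x hx => (hsum x hx).ne'
    exact (continuous_finsetSum _ fun (l : N) _ => hbc (l : ℝ)).continuousOn
  · exact fun k x => div_nonneg (hb0 _ _) (Finset.sum_nonneg fun _ _ => hb0 _ _)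
  · intro x hx
    rw [← Finset.sum_div, div_self (hsum x hx).ne']
  · intro k
    have h1 := (hp k).1.2
    have h2 := (hq k).1.2
    rw [Metric.mem_closedBall, Real.dist_eq, abs_le] at h1 h2
    linarith
  · intro k x hx h
    have := hbne k x fun h0 => h (by simp [h0])
    exact ⟨(hp k).2 ⟨hx, this⟩, (hq k).2 ⟨hx, this⟩⟩

/-- A continuous partition of unity on a compact set `C ⊆ ℝ` with nearby nodes in `C` that
reproduces the identity function exactly. -/
lemma exists_barycentric_partition {C : Set ℝ} (hC : IsCompact C) {ε : ℝ} (hε : 0 < ε) :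
    ∃ (ι : Type) (_ : Fintype ι) (φ : ι → ℝ → ℝ) (t : ι → ℝ),
      (∀ i, ContinuousOn (φ i) C) ∧ (∀ i, ∀ x ∈ C, 0 ≤ φ i x) ∧ (∀ x ∈ C, ∑ i, φ i x = 1) ∧
      (∀ x ∈ C, ∑ i, t i * φ i x = x) ∧ (∀ i, t i ∈ C) ∧
      (∀ i, ∀ x ∈ C, φ i x ≠ 0 → |x - t i| ≤ ε) := by
  obtain ⟨κ, _, ψ, p, q, hc, h0, h1, hp, hq, hpq, hs⟩ := exists_fine_partition hC hε
  -- If `p k = q k` this quotient is `0`, so that the node `q k` gets the whole mass.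
  let l : κ → ℝ → ℝ := fun k x => (q k - x) / (q k - p k)
  have hl : ∀ k, Continuous (l k) := fun k => by fun_prop
  refine ⟨κ ⊕ κ, inferInstance, Sum.elim (fun k x => ψ k x * l k x)
    (fun k x => ψ k x * (1 - l k x)), Sum.elim p q, ?_, ?_, ?_, ?_, ?_, ?_⟩
  · rintro (k | k)
    · exact (hc k).mul (hl k).continuousOn
    · exact (hc k).mul (continuous_const.sub (hl k)).continuousOn
  · have key : ∀ k, ∀ x ∈ C, ψ k x ≠ 0 → 0 ≤ l k x ∧ l k x ≤ 1 := by
      intro k x hx h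
      obtain ⟨h2, h3⟩ := hs k x hx h
      exact ⟨div_nonneg (by linarith) (by linarith), div_le_one_of_le₀ (by linarith) (by linarith)⟩
    rintro (k | k) x hx <;> by_cases h : ψ k x = 0
    · simp [h]
    · exact mul_nonneg (h0 k x) (key k x hx h).1
    · simp [h]
    · exact mul_nonneg (h0 k x) (sub_nonneg.2 (key k x hx h).2)
  · intro x hx
    rw [Fintype.sum_sum_type, ← Finset.sum_add_distrib]
    refine Eq.trans ?_ (h1 x hx)
    refine Finset.sum_congr rfl fun k _ => ?_
    simp only [Sum.elim_inl, Sum.elim_inr]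
    ring
  · intro x hx
    rw [Fintype.sum_sum_type, ← Finset.sum_add_distrib]
    have : ∀ k, p k * (ψ k x * l k x) + q k * (ψ k x * (1 - l k x)) = ψ k x * x := by
      intro k
      by_cases h : ψ k x = 0
      · simp [h]
      obtain ⟨h2, h3⟩ := hs k x hx h
      rcases eq_or_lt_of_le (h2.trans h3) with h4 | h4
      · have : l k x = 0 := by simp [l, h4]
        rw [this, le_antisymm h3 (h4 ▸ h2)]
        ring
      · have : q k - p k ≠ 0 := by linarith
        simp only [l]
        field_simp
        ring
    simp only [Sum.elim_inl, Sum.elim_inr, this]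
    rw [← Finset.sum_mul, h1 x hx, one_mul]
  · rintro (k | k)
    exacts [hp k, hq k]
  · have key : ∀ k, ∀ x ∈ C, ψ k x ≠ 0 → |x - p k| ≤ ε ∧ |x - q k| ≤ ε := by
      intro k x hx h
      obtain ⟨h2, h3⟩ := hs k x hx h
      have := hpq k
      constructor <;> rw [abs_le] <;> constructor <;> linarith
    rintro (k | k) x hx h
    · exact (key k x hx (left_ne_zero_of_mul h)).1
    · exact (key k x hx (left_ne_zero_of_mul h)).2

/-! ### Correction of the total mass by two point masses -/

open scoped ComplexOrder in
/-- A symmetric real matrix with nonpositive off-diagonal entries that is diagonally dominant is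
positive semidefinite: it is a nonnegative combination of the matrices of the forms `|x j|²` and
`|x k - x j|²`. -/
lemma posSemidef_of_rowSum_le {κ : Type} [Fintype κ] [DecidableEq κ] (M : κ → κ → ℝ) (d : κ → ℝ)
    (hM0 : ∀ k j, 0 ≤ M k j) (hMs : ∀ k j, M k j = M j k) (hd : ∀ k, ∑ j, M k j ≤ d k) :
    (Matrix.of fun k j => (((if k = j then d j else 0) - M k j : ℝ) : ℂ)).PosSemidef := by
  refine Matrix.PosSemidef.of_dotProduct_mulVec_nonneg ?_ fun x => ?_
  · ext k j
    simp only [Matrix.conjTranspose_apply, Matrix.of_apply, hMs j k, RCLike.star_def,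
      Complex.conj_ofReal, eq_comm (a := j) (b := k)]
    congr 2
    split_ifs with h
    · rw [h]
    · rfl
  · have key : star x ⬝ᵥ
        (Matrix.of fun k j => (((if k = j then d j else 0) - M k j : ℝ) : ℂ)).mulVec x
        = ((∑ k, (d k - ∑ j, M k j) * ‖x k‖ ^ 2 + ∑ k, ∑ j, M k j / 2 * ‖x k - x j‖ ^ 2 : ℝ) : ℂ) := by
      have hn : ∀ z : ℂ, ((‖z‖ ^ 2 : ℝ) : ℂ) = star z * z := fun z => by
        rw [← Complex.normSq_eq_norm_sq, Complex.normSq_eq_conj_mul_self]; rfl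
      have h1 : ∑ k, ∑ j, (M k j : ℂ) * (star (x j) * x j) =
          ∑ k, ∑ j, (M k j : ℂ) * (star (x k) * x k) := by
        rw [Finset.sum_comm]
        simp only [hMs]
      have h2 : ∑ k, ∑ j, (M k j : ℂ) * (star (x j) * x k) =
          ∑ k, ∑ j, (M k j : ℂ) * (star (x k) * x j) := by
        rw [Finset.sum_comm]
        simp only [hMs]
      have h3 : ∑ k, ∑ j, (M k j : ℂ) / 2 * (star (x k - x j) * (x k - x j)) =
          ∑ k, ∑ j, (M k j : ℂ) * (star (x k) * x k) -
            ∑ k, ∑ j, (M k j : ℂ) * (star (x k) * x j) := by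
        have : ∀ k j, (M k j : ℂ) / 2 * (star (x k - x j) * (x k - x j)) =
            (2⁻¹ : ℂ) * ((M k j : ℂ) * (star (x k) * x k) + (M k j : ℂ) * (star (x j) * x j)
            - (M k j : ℂ) * (star (x j) * x k) - (M k j : ℂ) * (star (x k) * x j)) := by
          intro k j; rw [star_sub]; ring
        simp only [this, ← Finset.mul_sum, Finset.sum_sub_distrib, Finset.sum_add_distrib, h1, h2]
        ring
      simp only [Complex.ofReal_add, Complex.ofReal_sum, Complex.ofReal_mul, hn,
        Complex.ofReal_sub, Complex.ofReal_div, Complex.ofReal_ofNat, h3]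
      simp only [dotProduct,
        Matrix.mulVec, Matrix.of_apply, Pi.star_apply, sub_mul, Finset.sum_sub_distrib,
        mul_sub, Finset.sum_mul, Finset.mul_sum]
      have h4 : ∀ k j, star (x k) * (((if k = j then d j else 0 : ℝ) : ℂ) * x j) =
        if k = j then (d k : ℂ) * (star (x k) * x k) else 0 := by
        intro k j
        split_ifs with h
        · subst h; ring
        · simp
      have h5 : ∀ k j, star (x k) * ((M k j : ℂ) * x j) = (M k j : ℂ) * (star (x k) * x j) := by
        intro k j; ring
      simp only [h4, h5, Finset.sum_ite_eq, Finset.mem_univ, if_true]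
      ring
    rw [key, Complex.zero_le_real]
    refine add_nonneg (Finset.sum_nonneg fun k _ => ?_)
      (Finset.sum_nonneg fun k _ => Finset.sum_nonneg fun j _ => ?_)
    · exact mul_nonneg (sub_nonneg.2 (hd k)) (sq_nonneg _)
    · exact mul_nonneg (div_nonneg (hM0 k j) zero_le_two) (sq_nonneg _)

open scoped ComplexOrder in
/-- Jensen's inequality for masses `G i` whose total `P + Q` and first moment `b P + a Q` need not be
related by a diagonal matrix. After scaling by `c`, the masses `diagonal (w r) - c P` at `b` and
`diagonal (w (1 - r)) - c Q` at `a` are added. They are positive by diagonal dominance, and the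
new total mass is `diagonal w`, with first moment `diagonal (w s)` for `s k = r k b + (1 - r k) a`,
so that `jensen_matrix` applies. -/
lemma jensen_discrete
    {J : Set ℝ} {f : ℝ → ℝ} (hopconv : OperatorConvexOn.{u} J f)
    {ι κ : Type} [Fintype ι] [Fintype κ] (G : ι → Matrix κ κ ℂ) (hG : ∀ i, (G i).PosSemidef)
    (t : ι → ℝ) (ht : ∀ i, t i ∈ J) {a b c C : ℝ} (ha : a ∈ J) (hb : b ∈ J)
    (hc : 0 ≤ c) (hfa : f a ≤ C) (hfb : f b ≤ C) (P Q : κ → κ → ℝ) (r w : κ → ℝ)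
    (hP0 : ∀ k j, 0 ≤ P k j) (hQ0 : ∀ k j, 0 ≤ Q k j)
    (hPs : ∀ k j, P k j = P j k) (hQs : ∀ k j, Q k j = Q j k)
    (hP : ∀ k, c * ∑ j, P k j ≤ w k * r k) (hQ : ∀ k, c * ∑ j, Q k j ≤ w k * (1 - r k))
    (hG1 : ∀ k j, ∑ i, G i k j = ((P k j + Q k j : ℝ) : ℂ))
    (hGt : ∀ k j, ∑ i, (t i : ℂ) * G i k j = ((b * P k j + a * Q k j : ℝ) : ℂ)) :
    ∑ k, f (r k * b + (1 - r k) * a) * w k ≤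
      c * (∑ i, (f (t i) : ℂ) * ∑ k, ∑ j, G i k j).re
        + C * (∑ k, w k - c * ∑ k, ∑ j, (P k j + Q k j)) := by
  classical
  let F : (κ → κ → ℝ) → (κ → ℝ) → Matrix κ κ ℂ := fun M d =>
    Matrix.of fun k j => (((if k = j then d j else 0) - M k j : ℝ) : ℂ)
  have hF : ∀ (M : κ → κ → ℝ) (d : κ → ℝ), (∀ k j, 0 ≤ M k j) → (∀ k j, M k j = M j k) →
      (∀ k, c * ∑ j, M k j ≤ d k) → (F (fun k j => c * M k j) d).PosSemidef := by
    intro M d h0 hs hd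
    refine posSemidef_of_rowSum_le _ _ (fun k j => mul_nonneg hc (h0 k j))
      (fun k j => by rw [hs]) fun k => ?_
    rw [← Finset.mul_sum]
    exact hd k
  have hFsum : ∀ (M : κ → κ → ℝ) (d : κ → ℝ), ∑ k, ∑ j, F (fun k j => c * M k j) d k j =
      ((∑ k, d k - c * ∑ k, ∑ j, M k j : ℝ) : ℂ) := by
    intro M d
    simp only [F, Matrix.of_apply, ← Complex.ofReal_sum]
    simp only [Finset.sum_sub_distrib, Finset.mul_sum, Finset.sum_ite_eq, Finset.mem_univ, if_true]
  have key := jensen_matrix hopconv (ι := ι ⊕ Bool) (κ := κ)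
    (Sum.elim (fun i => (c : ℂ) • G i) fun e =>
      bif e then F (fun k j => c * P k j) (fun k => w k * r k)
      else F (fun k j => c * Q k j) (fun k => w k * (1 - r k)))
    (by
      rintro (i | e)
      · exact (hG i).smul (Complex.zero_le_real.2 hc)
      · cases e
        · exact hF Q _ hQ0 hQs hQ
        · exact hF P _ hP0 hPs hP)
    (Sum.elim t fun e => bif e then b else a)
    (by
      rintro (i | e)
      · exact ht i
      · cases e
        exacts [ha, hb])
    (fun k => r k * b + (1 - r k) * a)
    (by
      intro k j
      have hGt' := hGt k j
      have hG1' := hG1 k j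
      simp only [Fintype.sum_sum_type, Fintype.sum_bool, Sum.elim_inl, Sum.elim_inr, cond_true,
        cond_false, Matrix.smul_apply, smul_eq_mul, mul_left_comm _ (c : ℂ), ← Finset.mul_sum,
        hGt', hG1', F, Matrix.of_apply]
      split_ifs with h
      · push_cast
        ring
      · push_cast
        ring)
  simp only [Fintype.sum_sum_type, Fintype.sum_bool, Sum.elim_inl, Sum.elim_inr, cond_true,
    cond_false, Matrix.smul_apply, smul_eq_mul, mul_left_comm _ (c : ℂ), ← Finset.mul_sum,
    hG1, hFsum] at key
  have e1 : (∑ k, ∑ j, ((f (r j * b + (1 - r j) * a) : ℝ) : ℂ) * (c * ((P k j + Q k j : ℝ) : ℂ) +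
      (F (fun k j => c * P k j) (fun k => w k * r k) k j +
        F (fun k j => c * Q k j) (fun k => w k * (1 - r k)) k j))) =
      ((∑ k, f (r k * b + (1 - r k) * a) * w k : ℝ) : ℂ) := by
    rw [Complex.ofReal_sum]
    refine Finset.sum_congr rfl fun k _ => ?_
    rw [Finset.sum_eq_single k]
    · simp only [F, Matrix.of_apply, if_true]
      push_cast
      ring
    · intro j _ hjk
      simp only [F, Matrix.of_apply, if_neg hjk.symm]
      push_cast
      ring
    · simp
  rw [e1, Complex.ofReal_re] at key
  refine key.trans ?_
  rw [Complex.add_re, Complex.add_re, Complex.re_ofReal_mul, ← Complex.ofReal_mul,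
    ← Complex.ofReal_mul, Complex.ofReal_re, Complex.ofReal_re]
  have n1 : 0 ≤ ∑ k, w k * r k - c * ∑ k, ∑ j, P k j := by
    rw [Finset.mul_sum, ← Finset.sum_sub_distrib]
    exact Finset.sum_nonneg fun k _ => sub_nonneg.2 (hP k)
  have n2 : 0 ≤ ∑ k, w k * (1 - r k) - c * ∑ k, ∑ j, Q k j := by
    rw [Finset.mul_sum, ← Finset.sum_sub_distrib]
    exact Finset.sum_nonneg fun k _ => sub_nonneg.2 (hQ k)
  have e2 : ∑ k, w k - c * ∑ k, ∑ j, (P k j + Q k j) =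
      (∑ k, w k * r k - c * ∑ k, ∑ j, P k j) +
        (∑ k, w k * (1 - r k) - c * ∑ k, ∑ j, Q k j) := by
    simp only [mul_sub, mul_one, Finset.sum_add_distrib, Finset.sum_sub_distrib]
    ring
  rw [e2]
  linarith [mul_le_mul_of_nonneg_right hfb n1, mul_le_mul_of_nonneg_right hfa n2]

/-! ### Finite positive operator-valued measures -/

open scoped ComplexOrder in
lemma posSemidef_inner_apply {K : Type*} [NormedAddCommGroup K] [InnerProductSpace ℂ K]
    [CompleteSpace K] {κ : Type} [Fintype κ] {T : K →L[ℂ] K} (hT : 0 ≤ T) (y : κ → K) :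
    (Matrix.of fun k j => ⟪y k, T (y j)⟫).PosSemidef := by
  have hT' := (ContinuousLinearMap.nonneg_iff_isPositive T).1 hT
  refine Matrix.PosSemidef.of_dotProduct_mulVec_nonneg ?_ fun x => ?_
  · ext k j
    simp only [Matrix.conjTranspose_apply, Matrix.of_apply, RCLike.star_def, inner_conj_symm]
    rw [← ContinuousLinearMap.adjoint_inner_right, ← ContinuousLinearMap.star_eq_adjoint,
      hT'.isSelfAdjoint.star_eq]
  · have : star x ⬝ᵥ (Matrix.of fun k j => ⟪y k, T (y j)⟫).mulVec x =
        ⟪∑ k, x k • y k, T (∑ k, x k • y k)⟫ := by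
      simp only [dotProduct, Matrix.mulVec, map_sum, map_smul, sum_inner, inner_sum,
        inner_smul_left, inner_smul_right, Matrix.of_apply, Pi.star_apply, RCLike.star_def,
        Finset.mul_sum]
      rw [Finset.sum_comm]
      refine Finset.sum_congr rfl fun _ _ => Finset.sum_congr rfl fun _ _ => by ring
    rw [this]
    exact hT'.inner_nonneg_right _

section functional

variable {K : Type*} [NormedAddCommGroup K] [InnerProductSpace ℂ K] [CompleteSpace K]

/-- The integral of `g` against the spectral measure of `S` at the vector `x`. -/
noncomputable def specInt (S : K →L[ℂ] K) (x : K) (g : ℝ → ℝ) : ℝ := (⟪x, cfc g S x⟫).re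

/-- In particular the inner product on the left is real. -/
lemma inner_cfc_cfc {S : K →L[ℂ] K} (x : K) {ψ g χ : ℝ → ℝ}
    (hψ : ContinuousOn ψ (spectrum ℝ S)) (hg : ContinuousOn g (spectrum ℝ S))
    (hχ : ContinuousOn χ (spectrum ℝ S)) :
    ⟪cfc ψ S x, cfc g S (cfc χ S x)⟫ = (specInt S x (fun τ => ψ τ * (g τ * χ τ)) : ℂ) := by
  have h1 : ∀ h : ℝ → ℝ, IsSelfAdjoint (cfc h S) := fun h => cfc_predicate h S
  have h2 : ∀ (h : ℝ → ℝ) (u v : K), ⟪cfc h S u, v⟫ = ⟪u, cfc h S v⟫ := by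
    intro h u v
    rw [← ContinuousLinearMap.adjoint_inner_right, ← ContinuousLinearMap.star_eq_adjoint,
      (h1 h).star_eq]
  rw [h2, ← mul_apply_eq_comp (cfc g S), ← mul_apply_eq_comp, ← cfc_mul _ _ S hg hχ,
    ← cfc_mul ψ (fun τ => g τ * χ τ) S hψ (hg.mul hχ), specInt]
  refine (Complex.conj_eq_iff_re.1 ?_).symm
  rw [inner_conj_symm, h2]

lemma specInt_one {S : K →L[ℂ] K} (hS : IsSelfAdjoint S) (x : K) :
    specInt S x (fun _ => 1) = ‖x‖ ^ 2 := by
  rw [specInt, cfc_const_one ℝ S]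
  simp [← inner_self_eq_norm_sq (𝕜 := ℂ)]

lemma specInt_congr {S : K →L[ℂ] K} (x : K) {g h : ℝ → ℝ} (hgh : (spectrum ℝ S).EqOn g h) :
    specInt S x g = specInt S x h := by
  rw [specInt, specInt, cfc_congr hgh]

lemma specInt_mono {S : K →L[ℂ] K} (x : K) {g h : ℝ → ℝ}
    (hg : ContinuousOn g (spectrum ℝ S)) (hh : ContinuousOn h (spectrum ℝ S))
    (hgh : ∀ τ ∈ spectrum ℝ S, g τ ≤ h τ) :
    specInt S x g ≤ specInt S x h := by
  have := ((ContinuousLinearMap.le_def _ _).1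
    (cfc_mono (a := S) hgh hg hh)).re_inner_nonneg_right x
  simpa [specInt, inner_sub_right] using this

lemma specInt_const_mul {S : K →L[ℂ] K} (x : K) (c : ℝ) {g : ℝ → ℝ}
    (hg : ContinuousOn g (spectrum ℝ S)) :
    specInt S x (fun τ => c * g τ) = c * specInt S x g := by
  rw [specInt, cfc_const_mul c g S hg, smul_apply, ← Complex.coe_smul, inner_smul_right,
    Complex.re_ofReal_mul, specInt]

lemma specInt_sum {S : K →L[ℂ] K} (x : K) {κ : Type} [Fintype κ] {g : κ → ℝ → ℝ}
    (hg : ∀ k, ContinuousOn (g k) (spectrum ℝ S)) :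
    specInt S x (fun τ => ∑ k, g k τ) = ∑ k, specInt S x (g k) := by
  have : cfc (fun τ => ∑ k, g k τ) S = ∑ k, cfc (g k) S := by
    rw [← cfc_sum_univ g S hg]
    congr 1
    ext
    simp
  simp [specInt, this]

lemma specInt_add {S : K →L[ℂ] K} (x : K) {g h : ℝ → ℝ}
    (hg : ContinuousOn g (spectrum ℝ S)) (hh : ContinuousOn h (spectrum ℝ S)) :
    specInt S x (fun τ => g τ + h τ) = specInt S x g + specInt S x h := by
  rw [specInt, cfc_add S g h hg hh]
  simp [specInt]

end functional

/-- Jensen's inequality for a finite positive operator-valued measure `E` with first moment `S`,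
where `f` is sampled on `S` at the nodes `s k` of a partition of unity `ψ`. It is
`jensen_discrete` for the Gram matrices of `E i` on the vectors `ψ k (S) x`. The diagonal
dominance comes from `hsa` and `hsb`: the distances of `s k` from `a` and `b` are at least `c` times
those of any point where `ψ k ≠ 0`. -/
lemma jensen_partition
    {J : Set ℝ} {f : ℝ → ℝ} (hopconv : OperatorConvexOn.{u} J f)
    {K : Type*} [NormedAddCommGroup K] [InnerProductSpace ℂ K] [CompleteSpace K]
    {S : K →L[ℂ] K} (hS : IsSelfAdjoint S) (x : K)
    {ι : Type} [Fintype ι] (E : ι → K →L[ℂ] K) (hE : ∀ i, 0 ≤ E i) (hE1 : ∑ i, E i = 1)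
    (t : ι → ℝ) (ht : ∀ i, t i ∈ J) (hEt : ∑ i, (t i : ℂ) • E i = S)
    {a b c C : ℝ} (ha : a ∈ J) (hb : b ∈ J) (hab : a < b) (hSab : spectrum ℝ S ⊆ Set.Icc a b)
    (hc : 0 ≤ c) (hfa : f a ≤ C) (hfb : f b ≤ C)
    {κ : Type} [Fintype κ] (ψ : κ → ℝ → ℝ) (hψ : ∀ k, ContinuousOn (ψ k) (spectrum ℝ S))
    (hψ0 : ∀ k τ, 0 ≤ ψ k τ) (hψ1 : ∀ τ ∈ spectrum ℝ S, ∑ k, ψ k τ = 1)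
    (s : κ → ℝ)
    (hsa : ∀ k, ∀ τ ∈ spectrum ℝ S, ψ k τ ≠ 0 → c * (τ - a) ≤ s k - a)
    (hsb : ∀ k, ∀ τ ∈ spectrum ℝ S, ψ k τ ≠ 0 → c * (b - τ) ≤ b - s k) :
    ∑ k, f (s k) * specInt S x (ψ k) ≤
      c * ∑ i, f (t i) * (⟪x, E i x⟫).re + C * ((1 - c) * ‖x‖ ^ 2) := by
  have hba : 0 < b - a := sub_pos.2 hab
  let y : κ → K := fun k => cfc (ψ k) S x
  have hy : ∑ k, y k = x := by
    have : ∑ k, cfc (ψ k) S = 1 := by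
      rw [← cfc_sum_univ ψ S hψ, cfc_congr (g := fun _ => 1), cfc_const_one ℝ S]
      intro τ hτ
      simpa using hψ1 τ hτ
    simpa [y] using congrArg (fun T : K →L[ℂ] K => T x) this
  let p : ℝ → ℝ := fun τ => (τ - a) / (b - a)
  let q : ℝ → ℝ := fun τ => (b - τ) / (b - a)
  have hp : ContinuousOn p (spectrum ℝ S) := by fun_prop
  have hq : ContinuousOn q (spectrum ℝ S) := by fun_prop
  have hp0 : ∀ τ ∈ spectrum ℝ S, 0 ≤ p τ := fun τ hτ =>
    div_nonneg (sub_nonneg.2 (hSab hτ).1) hba.le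
  have hq0 : ∀ τ ∈ spectrum ℝ S, 0 ≤ q τ := fun τ hτ =>
    div_nonneg (sub_nonneg.2 (hSab hτ).2) hba.le
  have hpq : ∀ τ, p τ + q τ = 1 := by
    intro τ
    simp only [p, q]
    field_simp
    ring
  have hbpaq : ∀ τ, b * p τ + a * q τ = τ := by
    intro τ
    simp only [p, q]
    field_simp
    ring
  let M : (ℝ → ℝ) → κ → κ → ℝ := fun g k j => specInt S x (fun τ => ψ k τ * (g τ * ψ j τ))
  have hMc : ∀ g k j, ContinuousOn g (spectrum ℝ S) →
      ContinuousOn (fun τ => ψ k τ * (g τ * ψ j τ)) (spectrum ℝ S) := fun g k j hg =>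
    (hψ k).mul (hg.mul (hψ j))
  have hM0 : ∀ g, ContinuousOn g (spectrum ℝ S) → (∀ τ ∈ spectrum ℝ S, 0 ≤ g τ) →
      ∀ k j, 0 ≤ M g k j := by
    intro g hg h0 k j
    have h1 : specInt S x (fun _ => 0) = 0 := by
      simpa using specInt_const_mul (S := S) x 0 (g := fun _ => 0) continuousOn_const
    rw [← h1]
    exact specInt_mono x continuousOn_const (hMc g k j hg) fun τ hτ =>
      mul_nonneg (hψ0 k τ) (mul_nonneg (h0 τ hτ) (hψ0 j τ))
  have hMs : ∀ g k j, M g k j = M g j k := by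
    intro g k j
    refine specInt_congr x fun τ _ => ?_
    ring
  have hMlin : ∀ (α β : ℝ) k j, α * M p k j + β * M q k j = M (fun τ => α * p τ + β * q τ) k j := by
    intro α β k j
    simp only [M]
    rw [← specInt_const_mul x α (hMc p k j hp), ← specInt_const_mul x β (hMc q k j hq),
      ← specInt_add x ((hMc p k j hp).const_mul α) ((hMc q k j hq).const_mul β)]
    refine specInt_congr x fun τ _ => ?_
    ring
  have hMrow : ∀ g, ContinuousOn g (spectrum ℝ S) → ∀ k,
      ∑ j, M g k j = specInt S x (fun τ => ψ k τ * g τ) := by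
    intro g hg k
    rw [← specInt_sum x fun j => hMc g k j hg]
    refine specInt_congr x fun τ hτ => ?_
    simp only [← Finset.mul_sum, hψ1 τ hτ, mul_one]
  have hMdom : ∀ g, ContinuousOn g (spectrum ℝ S) → ∀ (k : κ) (ρ : ℝ),
      (∀ τ ∈ spectrum ℝ S, ψ k τ ≠ 0 → c * g τ ≤ ρ) →
      c * ∑ j, M g k j ≤ specInt S x (ψ k) * ρ := by
    intro g hg k ρ h
    rw [hMrow g hg, mul_comm _ ρ, ← specInt_const_mul x c (g := fun τ => ψ k τ * g τ)
      ((hψ k).mul hg),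
      ← specInt_const_mul x ρ (hψ k)]
    refine specInt_mono x (((hψ k).mul hg).const_mul c) ((hψ k).const_mul ρ) fun τ hτ => ?_
    by_cases h0 : ψ k τ = 0
    · simp [h0]
    · linarith [mul_le_mul_of_nonneg_left (h τ hτ h0) (hψ0 k τ)]
  have hw : ∑ k, specInt S x (ψ k) = ‖x‖ ^ 2 := by
    rw [← specInt_sum x hψ, ← specInt_one hS x]
    exact specInt_congr x fun τ hτ => hψ1 τ hτ
  have hEapp : ∀ u, ∑ i, E i u = u := by
    intro u
    simpa using congrArg (fun T : K →L[ℂ] K => T u) hE1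
  have hEtapp : ∀ u, ∑ i, (t i : ℂ) • E i u = S u := by
    intro u
    simpa using congrArg (fun T : K →L[ℂ] K => T u) hEt
  have key := jensen_discrete hopconv
    (fun i => Matrix.of fun k j => ⟪y k, E i (y j)⟫) (fun i => posSemidef_inner_apply (hE i) y)
    t ht ha hb hc hfa hfb (M p) (M q) (fun k => (s k - a) / (b - a)) (fun k => specInt S x (ψ k))
    (hM0 p hp hp0) (hM0 q hq hq0) (hMs p) (hMs q)
    (fun k => hMdom p hp k _ fun τ hτ h => by
      simp only [p]
      rw [← mul_div_assoc]
      gcongr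
      exact hsa k τ hτ h)
    (fun k => hMdom q hq k _ fun τ hτ h => by
      have : 1 - (s k - a) / (b - a) = (b - s k) / (b - a) := by
        field_simp
        ring
      rw [this]
      simp only [q]
      rw [← mul_div_assoc]
      gcongr
      exact hsb k τ hτ h)
    (fun k j => by
      simp only [Matrix.of_apply, ← inner_sum, hEapp]
      have h1 := inner_cfc_cfc x (hψ k) (g := fun _ => 1) continuousOn_const (hψ j)
      rw [cfc_const_one ℝ S, one_apply_eq_self] at h1
      have h2 := hMlin 1 1 k j
      rw [one_mul, one_mul] at h2
      rw [h2]
      refine h1.trans ?_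
      simp only [one_mul, hpq, M])
    (fun k j => by
      simp only [Matrix.of_apply, ← inner_smul_right, ← inner_sum, hEtapp]
      have h1 := inner_cfc_cfc x (hψ k) (g := fun τ => τ) continuousOn_id (hψ j)
      rw [cfc_id' ℝ S] at h1
      rw [hMlin b a k j]
      refine h1.trans ?_
      simp only [hbpaq, M])
  have hPQ : ∑ k, ∑ j, (M p k j + M q k j) = ‖x‖ ^ 2 := by
    rw [← hw]
    refine Finset.sum_congr rfl fun k _ => ?_
    have h2 : ∀ j, M p k j + M q k j = M (fun _ => 1) k j := by
      intro j
      have h3 := hMlin 1 1 k j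
      simpa only [one_mul, hpq] using h3
    simp only [h2]
    rw [hMrow _ continuousOn_const]
    exact specInt_congr x fun τ _ => mul_one _
  have hG : ∀ i, ∑ k, ∑ j, ⟪y k, E i (y j)⟫ = ⟪x, E i x⟫ := by
    intro i
    simp only [← inner_sum, ← sum_inner, ← map_sum, hy]
  have hs : ∀ k, (s k - a) / (b - a) * b + (1 - (s k - a) / (b - a)) * a = s k := by
    intro k
    field_simp
    ring
  simp only [hs, Matrix.of_apply, hG, hPQ, hw, Complex.re_sum, Complex.re_ofReal_mul] at key
  linarith

/-! ### Unital positive maps -/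

section positive

variable {H K : Type*} [NormedAddCommGroup H] [InnerProductSpace ℂ H] [CompleteSpace H]
  [NormedAddCommGroup K] [InnerProductSpace ℂ K] [CompleteSpace K]
  {Φ : (H →L[ℂ] H) →ₗ[ℂ] (K →L[ℂ] K)}

lemma isSelfAdjoint_map_of_pos (hΦpos : ∀ T : H →L[ℂ] H, 0 ≤ T → 0 ≤ Φ T) {A : H →L[ℂ] H}
    (hA : IsSelfAdjoint A) : IsSelfAdjoint (Φ A) := by
  rw [← CFC.posPart_sub_negPart A hA, map_sub]
  exact (IsSelfAdjoint.of_nonneg (hΦpos _ (CFC.posPart_nonneg A))).sub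
    (IsSelfAdjoint.of_nonneg (hΦpos _ (CFC.negPart_nonneg A)))

lemma map_le_map (hΦpos : ∀ T : H →L[ℂ] H, 0 ≤ T → 0 ≤ Φ T) {A B : H →L[ℂ] H} (h : A ≤ B) :
    Φ A ≤ Φ B := by
  rw [← sub_nonneg, ← map_sub]
  exact hΦpos _ (sub_nonneg.2 h)

omit [CompleteSpace H] [CompleteSpace K] in
lemma map_smul_of_real (r : ℝ) (A : H →L[ℂ] H) : Φ (r • A) = r • Φ A := by
  rw [← Complex.coe_smul, map_smul, Complex.coe_smul]

omit [CompleteSpace H] [CompleteSpace K] in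
lemma map_algebraMap (hΦunital : Φ 1 = 1) (r : ℝ) :
    Φ (algebraMap ℝ (H →L[ℂ] H) r) = algebraMap ℝ (K →L[ℂ] K) r := by
  rw [Algebra.algebraMap_eq_smul_one, Algebra.algebraMap_eq_smul_one, map_smul_of_real, hΦunital]

lemma spectrum_map_subset_Icc (hΦpos : ∀ T : H →L[ℂ] H, 0 ≤ T → 0 ≤ Φ T) (hΦunital : Φ 1 = 1)
    {A : H →L[ℂ] H} (hA : IsSelfAdjoint A) {a b : ℝ} (hab : spectrum ℝ A ⊆ Set.Icc a b) :
    spectrum ℝ (Φ A) ⊆ Set.Icc a b := by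
  have hS := isSelfAdjoint_map_of_pos hΦpos hA
  have h1 : algebraMap ℝ _ a ≤ Φ A := by
    rw [← map_algebraMap hΦunital]
    exact map_le_map hΦpos ((algebraMap_le_iff_le_spectrum (a := A) hA).2 fun x hx => (hab hx).1)
  have h2 : Φ A ≤ algebraMap ℝ _ b := by
    rw [← map_algebraMap hΦunital]
    exact map_le_map hΦpos ((le_algebraMap_iff_spectrum_le (a := A) hA).2 fun x hx => (hab hx).2)
  exact fun x hx => ⟨(algebraMap_le_iff_le_spectrum hS).1 h1 x hx,
    (le_algebraMap_iff_spectrum_le hS).1 h2 x hx⟩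

omit [CompleteSpace K] in
lemma re_inner_le_of_le {T U : K →L[ℂ] K} (h : T ≤ U) (x : K) : (⟪x, T x⟫).re ≤ (⟪x, U x⟫).re := by
  have := ((ContinuousLinearMap.le_def _ _).1 h).re_inner_nonneg_right x
  simpa [inner_sub_right] using this

set_option maxHeartbeats 1000000 in
/-- The inequality up to an error that is linear in the mesh parameter `η`. -/
lemma specInt_le_add {J : Set ℝ} {f : ℝ → ℝ} (hopconv : OperatorConvexOn.{u} J f)
    (hΦpos : ∀ T : H →L[ℂ] H, 0 ≤ T → 0 ≤ Φ T) (hΦunital : Φ 1 = 1)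
    {A : H →L[ℂ] H} (hA : IsSelfAdjoint A) (hAspec : spectrum ℝ A ⊆ J)
    (hfA : ContinuousOn f (spectrum ℝ A)) (hfS : ContinuousOn f (spectrum ℝ (Φ A)))
    {a b : ℝ} (ha : a ∈ spectrum ℝ A) (hb : b ∈ spectrum ℝ A) (hab : a < b)
    (hAab : spectrum ℝ A ⊆ Set.Icc a b) (x : K) {η : ℝ} (hη : 0 < η) (hη1 : η ≤ 1) :
    specInt (Φ A) x f ≤ (⟪x, Φ (cfc f A) x⟫).re +
      η * (|(⟪x, Φ (cfc f A) x⟫).re| + (2 + max |f a| |f b|) * ‖x‖ ^ 2) := by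
  set S := Φ A with hSdef
  have hS : IsSelfAdjoint S := isSelfAdjoint_map_of_pos hΦpos hA
  have hSab := spectrum_map_subset_Icc hΦpos hΦunital hA hAab
  have hcA : IsCompact (spectrum ℝ A) := spectrum.isCompact A
  have hcS : IsCompact (spectrum ℝ S) := spectrum.isCompact S
  obtain ⟨δ, hδ, hfδ⟩ := Metric.uniformContinuousOn_iff_le.1
    (hcA.uniformContinuousOn_of_continuous hfA) η hη
  obtain ⟨δ', hδ', hfδ'⟩ := Metric.uniformContinuousOn_iff_le.1
    (hcS.uniformContinuousOn_of_continuous hfS) η hη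
  simp only [Real.dist_eq] at hfδ hfδ'
  obtain ⟨ι, _, φ, t, hφ, hφ0, hφ1, hφt, ht, hφs⟩ := exists_barycentric_partition hcA hδ
  set ε := min δ' (η * (b - a) / 4) with hε
  have hba : 0 < b - a := sub_pos.2 hab
  have hεpos : 0 < ε := lt_min hδ' (by positivity)
  have hε1 : ε ≤ δ' := min_le_left _ _
  have hε2 : ε ≤ η * (b - a) / 4 := min_le_right _ _
  obtain ⟨κ, _, ψ, p, q, hψ, hψ0, hψ1, hp, hq, hpq, hψs⟩ := exists_fine_partition hcS hεpos
  -- Nodes in the left half move right and nodes in the right half move left; the contraction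
  -- factor `1 - η` then absorbs the displacement, which is at most `ε`.
  let s : κ → ℝ := fun k => if q k ≤ (a + b) / 2 then q k else p k
  have hsS : ∀ k, s k ∈ spectrum ℝ S := by
    intro k
    simp only [s]
    split_ifs
    exacts [hq k, hp k]
  have hss : ∀ k, ∀ τ ∈ spectrum ℝ S, ψ k τ ≠ 0 → |τ - s k| ≤ ε := by
    intro k τ hτ h
    obtain ⟨h1, h2⟩ := hψs k τ hτ h
    have := hpq k
    simp only [s]
    split_ifs <;> rw [abs_le] <;> constructor <;> linarith
  have hφsum : ∀ g : ι → ℝ, cfc (fun x => ∑ i, g i * φ i x) A = ∑ i, g i • cfc (φ i) A := by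
    intro g
    have : (fun x => ∑ i, g i * φ i x) = ∑ i, fun x => g i * φ i x := by
      ext
      simp
    rw [this, cfc_sum_univ _ A fun i => (hφ i).const_mul (g i)]
    exact Finset.sum_congr rfl fun i _ => cfc_const_mul (g i) (φ i) A (hφ i)
  have hΦsum : ∀ g : ι → ℝ, Φ (cfc (fun x => ∑ i, g i * φ i x) A) =
      ∑ i, (g i : ℂ) • Φ (cfc (φ i) A) := by
    intro g
    rw [hφsum, map_sum]
    exact Finset.sum_congr rfl fun i _ => by rw [map_smul_of_real, Complex.coe_smul]
  have hw : ∑ k, specInt S x (ψ k) = ‖x‖ ^ 2 := by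
    rw [← specInt_sum x hψ, ← specInt_one hS x]
    exact specInt_congr x fun τ hτ => hψ1 τ hτ
  have key := jensen_partition hopconv hS x (fun i => Φ (cfc (φ i) A))
    (fun i => hΦpos _ (cfc_nonneg (hφ0 i)))
    (by
      have h := hΦsum fun _ => 1
      simp only [one_mul, Complex.ofReal_one, one_smul] at h
      rw [← h, cfc_congr (g := fun _ => 1) hφ1, cfc_const_one ℝ A, hΦunital])
    t (fun i => hAspec (ht i))
    (by rw [← hΦsum t, cfc_congr (g := fun x => x) hφt, cfc_id' ℝ A])
    (hAspec ha) (hAspec hb) hab hSab (c := 1 - η) (sub_nonneg.2 hη1)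
    (C := max |f a| |f b|) ((le_abs_self _).trans (le_max_left _ _))
    ((le_abs_self _).trans (le_max_right _ _)) ψ hψ hψ0 hψ1 s
    (fun k τ hτ h => by
      obtain ⟨h1, h2⟩ := hψs k τ hτ h
      obtain ⟨h3, h4⟩ := hSab hτ
      have h5 := hpq k
      have h6 : 0 ≤ η * (τ - a) := mul_nonneg hη.le (sub_nonneg.2 h3)
      simp only [s]
      split_ifs with h7
      · linarith
      · have h8 : η * (τ - a) ≥ η * ((b - a) / 4) := by
          gcongr
          nlinarith
        linarith)
    (fun k τ hτ h => by
      obtain ⟨h1, h2⟩ := hψs k τ hτ h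
      obtain ⟨h3, h4⟩ := hSab hτ
      have h5 := hpq k
      have h6 : 0 ≤ η * (b - τ) := mul_nonneg hη.le (sub_nonneg.2 h4)
      simp only [s]
      split_ifs with h7
      · have h8 : η * (b - τ) ≥ η * ((b - a) / 4) := by
          gcongr
          linarith
        linarith
      · linarith)
  have hleft : specInt S x f ≤ ∑ k, f (s k) * specInt S x (ψ k) + η * ‖x‖ ^ 2 := by
    have h1 : ∀ k, ContinuousOn (fun τ => (f (s k) + η) * ψ k τ) (spectrum ℝ S) := fun k =>
      (hψ k).const_mul _
    have h2 : ∑ k, f (s k) * specInt S x (ψ k) + η * ‖x‖ ^ 2 =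
        specInt S x fun τ => ∑ k, (f (s k) + η) * ψ k τ := by
      rw [specInt_sum x h1, ← hw, Finset.mul_sum, ← Finset.sum_add_distrib]
      refine Finset.sum_congr rfl fun k _ => ?_
      rw [specInt_const_mul x _ (hψ k), add_mul]
    rw [h2]
    refine specInt_mono x hfS (continuousOn_finsetSum _ fun k _ => h1 k) fun τ hτ => ?_
    rw [← mul_one (f τ), ← hψ1 τ hτ, Finset.mul_sum]
    refine Finset.sum_le_sum fun k _ => ?_
    by_cases h : ψ k τ = 0
    · simp [h]
    · refine mul_le_mul_of_nonneg_right ?_ (hψ0 k τ)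
      have := abs_le.1 (hfδ' τ hτ (s k) (hsS k) ((hss k τ hτ h).trans hε1))
      linarith
  have hright : ∑ i, f (t i) * (⟪x, Φ (cfc (φ i) A) x⟫).re ≤
      (⟪x, Φ (cfc f A) x⟫).re + η * ‖x‖ ^ 2 := by
    have h1 : cfc (fun y => ∑ i, f (t i) * φ i y) A ≤ cfc (fun y => f y + η) A := by
      refine cfc_mono (fun y hy => ?_)
        (continuousOn_finsetSum _ fun i _ => (hφ i).const_mul _) (hfA.add continuousOn_const)
      rw [← mul_one (f y + η), ← hφ1 y hy, Finset.mul_sum]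
      refine Finset.sum_le_sum fun i _ => ?_
      by_cases h : φ i y = 0
      · simp [h]
      · refine mul_le_mul_of_nonneg_right ?_ (hφ0 i y hy)
        have := abs_le.1 (hfδ y hy (t i) (ht i) (hφs i y hy h))
        linarith
    have h2 := re_inner_le_of_le (map_le_map hΦpos h1) x
    rw [hΦsum fun i => f (t i), cfc_add_const η f A hfA, map_add, map_algebraMap hΦunital,
      Algebra.algebraMap_eq_smul_one] at h2
    simp only [sum_apply, smul_apply, add_apply, one_apply_eq_self,
      inner_sum, inner_add_right, Complex.re_sum, Complex.add_re, inner_smul_right,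
      Complex.re_ofReal_mul] at h2
    rw [← Complex.coe_smul, inner_smul_right, Complex.re_ofReal_mul] at h2
    have h3 : (⟪x, x⟫).re = ‖x‖ ^ 2 := by
      simp [← inner_self_eq_norm_sq (𝕜 := ℂ)]
    rwa [h3] at h2
  have h1 := mul_le_mul_of_nonneg_left hright (sub_nonneg.2 hη1)
  have h3 : -|(⟪x, Φ (cfc f A) x⟫).re| ≤ (⟪x, Φ (cfc f A) x⟫).re := neg_abs_le _
  have h4 := mul_nonneg hη.le (neg_le_iff_add_nonneg.1 h3)
  have h5 : 0 ≤ η * (η * ‖x‖ ^ 2) := by positivity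
  linarith

/-- The inequality when `f` is continuous on the spectrum of `Φ A`. This is automatic if `J` is an
interval. -/
lemma jensen_of_continuousOn {J : Set ℝ} {f : ℝ → ℝ} (hcont : ContinuousOn f J)
    (hopconv : OperatorConvexOn.{u} J f)
    (hΦpos : ∀ T : H →L[ℂ] H, 0 ≤ T → 0 ≤ Φ T) (hΦunital : Φ 1 = 1)
    {A : H →L[ℂ] H} (hA : IsSelfAdjoint A) (hAspec : spectrum ℝ A ⊆ J)
    (hfS : ContinuousOn f (spectrum ℝ (Φ A))) :
    cfc f (Φ A) ≤ Φ (cfc f A) := by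
  have hfA := hcont.mono hAspec
  have hS := isSelfAdjoint_map_of_pos hΦpos hA
  rcases subsingleton_or_nontrivial (H →L[ℂ] H) with hH | hH
  · have : (1 : K →L[ℂ] K) = 0 := by
      rw [← hΦunital, Subsingleton.elim (1 : H →L[ℂ] H) 0, map_zero]
    have := subsingleton_of_zero_eq_one this.symm
    exact (Subsingleton.elim _ _).le
  have hcA : IsCompact (spectrum ℝ A) := spectrum.isCompact A
  have hne := ContinuousFunctionalCalculus.spectrum_nonempty (R := ℝ) A hA
  obtain ⟨a, ha, ha'⟩ := hcA.exists_isLeast hne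
  obtain ⟨b, hb, hb'⟩ := hcA.exists_isGreatest hne
  have hAab : spectrum ℝ A ⊆ Set.Icc a b := fun y hy => ⟨ha' hy, hb' hy⟩
  rcases (ha' hb).eq_or_lt with rfl | hab
  · have h1 : cfc f A = algebraMap ℝ _ (f a) := by
      rw [← cfc_const (f a) A]
      exact cfc_congr fun y hy => by rw [le_antisymm (hAab hy).2 (hAab hy).1]
    have h2 : cfc f (Φ A) = algebraMap ℝ _ (f a) := by
      rw [← cfc_const (f a) (Φ A)]
      refine cfc_congr fun y hy => ?_
      have := spectrum_map_subset_Icc hΦpos hΦunital hA hAab hy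
      rw [le_antisymm this.2 this.1]
    rw [h1, h2, map_algebraMap hΦunital]
  · rw [ContinuousLinearMap.le_def]
    have hsa : IsSelfAdjoint (Φ (cfc f A) - cfc f (Φ A)) :=
      (isSelfAdjoint_map_of_pos hΦpos (cfc_predicate f A)).sub (cfc_predicate f (Φ A))
    refine (ContinuousLinearMap.isPositive_def').2 ⟨hsa, fun x => ?_⟩
    rw [ContinuousLinearMap.reApplyInnerSelf_apply, inner_re_symm]
    simp only [sub_apply, inner_sub_right, map_sub, RCLike.re_to_complex, sub_nonneg]
    refine le_of_forall_pos_le_add fun ε hε => ?_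
    set L := |(⟪x, Φ (cfc f A) x⟫).re| + (2 + max |f a| |f b|) * ‖x‖ ^ 2
    have hL : 0 ≤ L := by positivity
    refine (specInt_le_add hopconv hΦpos hΦunital hA hAspec hfA hfS ha hb hab hAab x
      (η := min 1 (ε / (L + 1))) (by positivity) (min_le_left _ _)).trans ?_
    gcongr
    calc min 1 (ε / (L + 1)) * L ≤ ε / (L + 1) * (L + 1) := by
          gcongr
          · exact min_le_right _ _
          · linarith
      _ = ε := by field_simp

end positive

/-! ### Functions that are discontinuous between points of `J` -/

lemma spectrum_subset_of_mul_eq_zero {R : Type*} [Ring R] [Algebra ℝ R] {T : R} {α β γ : ℝ}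
    (h : (T - algebraMap ℝ R α) * (T - algebraMap ℝ R β) * (T - algebraMap ℝ R γ) = 0) :
    spectrum ℝ T ⊆ {α, β, γ} := by
  intro r hr
  have h1 := spectrum.subset_polynomial_aeval T
    ((Polynomial.X - Polynomial.C α) * (Polynomial.X - Polynomial.C β) *
      (Polynomial.X - Polynomial.C γ)) ⟨r, hr, rfl⟩
  simp only [map_mul, map_sub, Polynomial.aeval_X, Polynomial.aeval_C, h, Polynomial.eval_mul,
    Polynomial.eval_sub, Polynomial.eval_X, Polynomial.eval_C] at h1
  have h2 : (r - α) * (r - β) * (r - γ) = 0 := by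
    by_contra h2
    apply h1
    rw [spectrum.mem_resolventSet_iff, sub_zero]
    exact (isUnit_iff_ne_zero.2 h2).map (algebraMap ℝ R)
  simpa [sub_eq_zero, or_assoc] using h2

lemma isSelfAdjoint_mapCLM {ι : Type*} {F : Type*} [NormedAddCommGroup F] [InnerProductSpace ℂ F]
    [CompleteSpace F] (T : ι → F →L[ℂ] F) {C : ℝ} (hC : 0 ≤ C) (hT : ∀ i, ‖T i‖ ≤ C)
    (hsa : ∀ i, IsSelfAdjoint (T i)) :
    IsSelfAdjoint (lp.mapCLM (E := fun _ => F) (F := fun _ => F) 2 T hC hT) := by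
  rw [ContinuousLinearMap.isSelfAdjoint_iff_isSymmetric]
  intro x y
  have h : ∀ i, ⟪T i (x i), y i⟫ = ⟪x i, T i (y i)⟫ := fun i =>
    (ContinuousLinearMap.isSelfAdjoint_iff_isSymmetric.1 (hsa i)) _ _
  simp only [lp.inner_eq_tsum]
  exact tsum_congr h

/-- The unit vector of `ℂ²` at angle `± arccos √ρ` from the first axis. -/
noncomputable def tiltedVector (σ ρ : ℝ) : EuclideanSpace ℂ (Fin 2) :=
  !₂[(√ρ : ℂ), ((σ * √(1 - ρ) : ℝ) : ℂ)]

lemma norm_tiltedVector {σ ρ : ℝ} (hσ : σ ^ 2 = 1) (h0 : 0 ≤ ρ) (h1 : ρ ≤ 1) :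
    ‖tiltedVector σ ρ‖ = 1 := by
  rw [← sq_eq_sq₀ (norm_nonneg _) zero_le_one, EuclideanSpace.norm_sq_eq, Fin.sum_univ_two]
  simp only [tiltedVector, PiLp.toLp_apply, Matrix.cons_val_zero, Matrix.cons_val_one,
    Complex.norm_real, Real.norm_eq_abs, sq_abs, mul_pow, hσ, Real.sq_sqrt h0,
    Real.sq_sqrt (sub_nonneg.2 h1)]
  norm_num

/-- The two orthogonal projections onto the lines at angles `± arccos √ρ` average to a diagonal
matrix, whose first entry is `ρ`. -/
lemma starProjection_tiltedVector_add {ρ : ℝ} (h0 : 0 ≤ ρ) (h1 : ρ ≤ 1) :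
    (ℂ ∙ tiltedVector 1 ρ).starProjection (EuclideanSpace.single 0 1) +
      (ℂ ∙ tiltedVector (-1) ρ).starProjection (EuclideanSpace.single 0 1) =
      ((2 * ρ : ℝ) : ℂ) • EuclideanSpace.single 0 1 := by
  have hin : ∀ σ, ⟪tiltedVector σ ρ, EuclideanSpace.single 0 1⟫ = (√ρ : ℂ) := by
    intro σ
    simp [EuclideanSpace.inner_single_right, tiltedVector]
  rw [Submodule.starProjection_unit_singleton ℂ (norm_tiltedVector (by norm_num) h0 h1),
    Submodule.starProjection_unit_singleton ℂ (norm_tiltedVector (by norm_num) h0 h1), hin, hin]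
  have h : (√ρ : ℂ) * √ρ = ρ := by
    rw [← Complex.ofReal_mul, Real.mul_self_sqrt h0]
  ext i
  fin_cases i
  · simp [tiltedVector, h]
    ring
  · simp [tiltedVector]

section generic

variable {F : Type*} [NormedAddCommGroup F] [InnerProductSpace ℂ F] [CompleteSpace F]

lemma isSelfAdjoint_real_smul (r : ℝ) {T : F →L[ℂ] F} (hT : IsSelfAdjoint T) :
    IsSelfAdjoint (r • T) :=
  IsSelfAdjoint.smul (.all r) hT

omit [CompleteSpace F] in
lemma average_apply (S T : F →L[ℂ] F) (x : F) :
    ((1 - 1 / 2 : ℝ) • S + (1 / 2 : ℝ) • T) x = (1 / 2 : ℂ) • (S x + T x) := by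
  simp only [add_apply, smul_apply, ← Complex.coe_smul]
  push_cast
  module

omit [CompleteSpace F] in
lemma real_smul_one_apply (r : ℝ) (x : F) : (r • 1 : F →L[ℂ] F) x = (r : ℂ) • x := by
  simp

omit [CompleteSpace F] in
lemma real_smul_one_sub (r : ℝ) : (r • 1 - (r : ℂ) • 1 : F →L[ℂ] F) = 0 := by
  rw [Complex.coe_smul, sub_self]

end generic

/-- The operator `α + (β - α) P`, for a projection `P` onto a line. -/
noncomputable def twoPointOperator {F : Type*} [NormedAddCommGroup F] [InnerProductSpace ℂ F]
    (α β : ℝ) (v : F) : F →L[ℂ] F :=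
  α • 1 + (β - α) • (ℂ ∙ v).starProjection

section twoPoint

variable {F : Type*} [NormedAddCommGroup F] [InnerProductSpace ℂ F] (α β : ℝ) (v : F)

lemma isSelfAdjoint_twoPointOperator [CompleteSpace F] : IsSelfAdjoint (twoPointOperator α β v) :=
  (isSelfAdjoint_real_smul _ (.one _)).add
    (isSelfAdjoint_real_smul _ (isSelfAdjoint_starProjection _))

lemma norm_twoPointOperator_le [Nontrivial F] : ‖twoPointOperator α β v‖ ≤ |α| + |β - α| := by
  refine (norm_add_le _ _).trans ?_
  rw [norm_smul, norm_smul, Real.norm_eq_abs, Real.norm_eq_abs, norm_one, mul_one]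
  gcongr
  exact mul_le_of_le_one_right (abs_nonneg _) (Submodule.starProjection_norm_le _)

lemma twoPointOperator_mul_eq_zero :
    (twoPointOperator α β v - (α : ℂ) • 1) * (twoPointOperator α β v - (β : ℂ) • 1) = 0 := by
  have h := (ℂ ∙ v).isIdempotentElem_starProjection.eq
  simp only [twoPointOperator, Complex.coe_smul, add_sub_cancel_left, smul_mul_assoc,
    mul_sub, mul_add, mul_smul_comm, mul_one, h]
  module

lemma twoPointOperator_apply (x : F) : twoPointOperator α β v x =
    (α : ℂ) • x + ((β - α : ℝ) : ℂ) • (ℂ ∙ v).starProjection x := by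
  simp only [twoPointOperator, add_apply, smul_apply, one_apply_eq_self, Complex.coe_smul]

end twoPoint

/-- The operator `α + (β - α) P`, with `P` the projection onto the line spanned by
`tiltedVector σ ρ` and `ρ = (z - α) / (β - α)`. Its eigenvalues are `α`, `β` and its first diagonal
entry is `z`. -/
noncomputable def tiltedOperator (α β σ z : ℝ) :
    EuclideanSpace ℂ (Fin 2) →L[ℂ] EuclideanSpace ℂ (Fin 2) :=
  twoPointOperator α β (tiltedVector σ ((z - α) / (β - α)))

lemma tiltedOperator_add_apply {α β z : ℝ} (hz : z ∈ Set.Icc α β) :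
    tiltedOperator α β 1 z (EuclideanSpace.single 0 1) +
      tiltedOperator α β (-1) z (EuclideanSpace.single 0 1) =
      ((2 * z : ℝ) : ℂ) • EuclideanSpace.single 0 1 := by
  obtain ⟨h1, h2⟩ := hz
  have h3 := starProjection_tiltedVector_add (ρ := (z - α) / (β - α))
    (div_nonneg (by linarith) (by linarith)) (div_le_one_of_le₀ (by linarith) (by linarith))
  rw [tiltedOperator, tiltedOperator, twoPointOperator_apply, twoPointOperator_apply,
    add_add_add_comm, ← smul_add ((β - α : ℝ) : ℂ), h3, smul_smul, ← add_smul, ← add_smul]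
  congr 1
  norm_cast
  rcases (h1.trans h2).eq_or_lt with rfl | h
  · linarith
  · have : β - α ≠ 0 := by linarith
    field_simp
    ring

lemma spectrum_subset_of_complex_smul {F : Type*} [NormedAddCommGroup F] [InnerProductSpace ℂ F]
    {T : F →L[ℂ] F} {α β γ : ℝ}
    (h : (T - (α : ℂ) • 1) * (T - (β : ℂ) • 1) * (T - (γ : ℂ) • 1) = 0) :
    spectrum ℝ T ⊆ {α, β, γ} := by
  apply spectrum_subset_of_mul_eq_zero
  simpa only [Algebra.algebraMap_eq_smul_one, Complex.coe_smul] using h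

/-- If `f` is discontinuous on a set `Z` of eigenvalues of `(S + T) / 2`, then `f ((S + T) / 2)` is
`0` by convention, and operator convexity gives `0 ≤ f γ` for each common eigenvalue `γ` of `S` and
`T` with a common eigenvector. -/
lemma nonneg_of_average_eigenvectors {J : Set ℝ} {f : ℝ → ℝ} (hopconv : OperatorConvexOn.{u} J f)
    {E : Type u} [NormedAddCommGroup E] [InnerProductSpace ℂ E] [CompleteSpace E]
    {S T : E →L[ℂ] E} (hS : IsSelfAdjoint S) (hT : IsSelfAdjoint T)
    (hSJ : spectrum ℝ S ⊆ J) (hTJ : spectrum ℝ T ⊆ J)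
    (hSfin : (spectrum ℝ S).Finite) (hTfin : (spectrum ℝ T).Finite)
    {Z : Set ℝ} (hf : ¬ ContinuousOn f Z)
    (hZ : ∀ z ∈ Z, ∃ x : E, x ≠ 0 ∧ S x + T x = ((2 * z : ℝ) : ℂ) • x)
    {γ : ℝ} {v : E} (hv : v ≠ 0) (hSv : S v = (γ : ℂ) • v) (hTv : T v = (γ : ℂ) • v) :
    0 ≤ f γ := by
  have key := hopconv E S T hS hT hSJ hTJ (1 / 2) (by norm_num) (by norm_num)
  have hYspec : Z ⊆ spectrum ℝ ((1 - 1 / 2 : ℝ) • S + (1 / 2 : ℝ) • T) := by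
    intro z hz
    obtain ⟨x, hx, hxz⟩ := hZ z hz
    refine mem_spectrum_of_apply_eq_smul (v := x) ?_ hx
    rw [average_apply, hxz, smul_smul, ← Complex.coe_smul]
    congr 1
    push_cast
    ring
  rw [cfc_apply_of_not_continuousOn _ fun h => hf (h.mono hYspec)] at key
  have h1 := re_inner_le_of_le key v
  rw [average_apply, cfc_apply_eigenvector f S hS hSfin (by rwa [← Complex.coe_smul]),
    cfc_apply_eigenvector f T hT hTfin (by rwa [← Complex.coe_smul]), ← Complex.coe_smul,
    ← two_smul ℂ, smul_smul, smul_smul, zero_apply, inner_zero_right, inner_smul_right,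
    inner_self_eq_norm_sq_to_K] at h1
  norm_num at h1
  norm_cast at h1
  exact nonneg_of_mul_nonneg_left h1 (by positivity)

/-- If `f` is discontinuous on a set `Z` between two points `α`, `β` of `J`, then `f ≥ 0` on `J`.
On the direct sum of copies of `ℂ²` indexed by `Z` and one further point, there are two operators
with spectra in `{α, β, γ}`, with common eigenvalue `γ`, whose mean has every point of `Z` as an
eigenvalue. -/
lemma nonneg_of_not_continuousOn {J : Set ℝ} {f : ℝ → ℝ} (hopconv : OperatorConvexOn.{u} J f)
    {α β γ : ℝ} (hα : α ∈ J) (hβ : β ∈ J) (hγ : γ ∈ J) {Z : Set ℝ} (hZ : Z ⊆ Set.Icc α β)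
    (hf : ¬ ContinuousOn f Z) : 0 ≤ f γ := by
  classical
  let T : ℝ → ULift.{u} (Option Z) → EuclideanSpace ℂ (Fin 2) →L[ℂ] EuclideanSpace ℂ (Fin 2) :=
    fun σ i => i.down.elim (γ • 1) fun z => tiltedOperator α β σ z
  set C : ℝ := |γ| + (|α| + |β - α|)
  have hC : 0 ≤ C := by positivity
  have hT : ∀ σ i, ‖T σ i‖ ≤ C := by
    rintro σ ⟨_ | z⟩
    · simp only [T, Option.elim, norm_smul, norm_one, mul_one, Real.norm_eq_abs]
      exact le_add_of_nonneg_right (by positivity)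
    · exact (norm_twoPointOperator_le α β _).trans (le_add_of_nonneg_left (abs_nonneg γ))
  have hTsa : ∀ σ i, IsSelfAdjoint (T σ i) := by
    rintro σ ⟨_ | z⟩
    · exact isSelfAdjoint_real_smul γ (.one _)
    · exact isSelfAdjoint_twoPointOperator α β _
  have hT0 : ∀ σ i, (T σ i - (α : ℂ) • 1) * (T σ i - (β : ℂ) • 1) *
      (T σ i - (γ : ℂ) • 1) = 0 := by
    rintro σ ⟨_ | z⟩
    · simp only [T, Option.elim]
      rw [real_smul_one_sub, mul_zero]
    · simp only [T, Option.elim]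
      rw [tiltedOperator, twoPointOperator_mul_eq_zero, zero_mul]
  let B : ℝ → lp (fun _ : ULift.{u} (Option Z) => EuclideanSpace ℂ (Fin 2)) 2 →L[ℂ]
      lp (fun _ : ULift.{u} (Option Z) => EuclideanSpace ℂ (Fin 2)) 2 := fun σ =>
    lp.mapCLM 2 (T σ) hC (hT σ)
  have hBapp : ∀ σ x i, B σ x i = T σ i (x i) := fun σ x i => rfl
  have hBsa : ∀ σ, IsSelfAdjoint (B σ) := fun σ => isSelfAdjoint_mapCLM _ hC (hT σ) (hTsa σ)
  have hBspec : ∀ σ, spectrum ℝ (B σ) ⊆ {α, β, γ} := by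
    intro σ
    refine spectrum_subset_of_complex_smul ?_
    ext1 x
    apply lp.ext
    funext i
    exact congrArg (fun A => A (x i)) (hT0 σ i)
  have hJ : ({α, β, γ} : Set ℝ) ⊆ J := by
    rintro _ (rfl | rfl | rfl) <;> assumption
  have hfin : ∀ σ, (spectrum ℝ (B σ)).Finite := fun σ =>
    (Set.toFinite {α, β, γ}).subset (hBspec σ)
  have hBsingle : ∀ σ i a, B σ (lp.single 2 i a) = lp.single 2 i (T σ i a) := by
    intro σ i a
    apply lp.ext
    funext j
    rw [hBapp]
    by_cases h : j = i
    · subst h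
      simp
    · rw [lp.single_apply_ne _ _ _ h, lp.single_apply_ne _ _ _ h, map_zero]
  have hsingle : ∀ i : ULift.{u} (Option Z),
      lp.single (E := fun _ => EuclideanSpace ℂ (Fin 2)) 2 i (EuclideanSpace.single 0 1) ≠ 0 := by
    intro i h0
    have := congrArg (fun x : lp (fun _ : ULift.{u} (Option Z) => EuclideanSpace ℂ (Fin 2)) 2 =>
      x i 0) h0
    simp at this
  refine nonneg_of_average_eigenvectors hopconv (hBsa 1) (hBsa (-1)) ((hBspec 1).trans hJ)
    ((hBspec (-1)).trans hJ) (hfin 1) (hfin (-1)) hf (fun z hz => ?_)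
    (v := lp.single 2 ⟨none⟩ (EuclideanSpace.single 0 1)) ?_ ?_ ?_
  · refine ⟨lp.single 2 ⟨some ⟨z, hz⟩⟩ (EuclideanSpace.single 0 1), hsingle _, ?_⟩
    rw [hBsingle, hBsingle, ← lp.single_add, ← lp.single_smul]
    exact congrArg _ (tiltedOperator_add_apply (hZ hz))
  · exact hsingle _
  · rw [hBsingle, ← lp.single_smul]
    exact congrArg _ (real_smul_one_apply γ _)
  · rw [hBsingle, ← lp.single_smul]
    exact congrArg _ (real_smul_one_apply γ _)

/-! ### The Choi–Davis inequality -/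

/-- **Choi–Davis inequality.** If `f` is a continuous operator convex function on an interval
`J`, `Φ` is a unital positive linear map and `A` is self-adjoint with spectrum in `J`, then
`f(Φ(A)) ≤ Φ(f(A))`. Operator convexity is phrased over all complex Hilbert spaces (in a
fixed universe). -/
theorem stmt_17
    {H K : Type*} [NormedAddCommGroup H] [InnerProductSpace ℂ H] [CompleteSpace H]
    [NormedAddCommGroup K] [InnerProductSpace ℂ K] [CompleteSpace K]
    (J : Set ℝ) (f : ℝ → ℝ) (hcont : ContinuousOn f J)
    (hopconv : ∀ (E : Type u) [NormedAddCommGroup E] [InnerProductSpace ℂ E] [CompleteSpace E],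
      ∀ A B : E →L[ℂ] E, IsSelfAdjoint A → IsSelfAdjoint B →
        spectrum ℝ A ⊆ J → spectrum ℝ B ⊆ J → ∀ v : ℝ, 0 < v → v < 1 →
          cfc f ((1 - v) • A + v • B) ≤ (1 - v) • cfc f A + v • cfc f B)
    (Φ : (H →L[ℂ] H) →ₗ[ℂ] (K →L[ℂ] K))
    (hΦpos : ∀ T : H →L[ℂ] H, 0 ≤ T → 0 ≤ Φ T)
    (hΦunital : Φ 1 = 1)
    (A : H →L[ℂ] H) (hA : IsSelfAdjoint A) (hAspec : spectrum ℝ A ⊆ J) :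
    cfc f (Φ A) ≤ Φ (cfc f A) := by
  by_cases hfS : ContinuousOn f (spectrum ℝ (Φ A))
  · exact jensen_of_continuousOn hcont hopconv hΦpos hΦunital hA hAspec hfS
  · rw [cfc_apply_of_not_continuousOn _ hfS]
    refine hΦpos _ (cfc_nonneg fun γ hγ => ?_)
    have hcA : IsCompact (spectrum ℝ A) := spectrum.isCompact A
    obtain ⟨α, hα, hα'⟩ := hcA.exists_isLeast ⟨γ, hγ⟩
    obtain ⟨β, hβ, hβ'⟩ := hcA.exists_isGreatest ⟨γ, hγ⟩
    exact nonneg_of_not_continuousOn hopconv (hAspec hα) (hAspec hβ) (hAspec hγ)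
      (spectrum_map_subset_Icc hΦpos hΦunital hA fun y hy => ⟨hα' hy, hβ' hy⟩) hfS
end

section
/- Let f : J → ℝ be a continuous function on an interval J that is operator convex, let Φ₁,…,Φₙ : B(H) → B(K) be positive linear maps with Σᵢ₌₁ⁿ Φᵢ(1_H) = 1_K, and let A₁,…,Aₙ ∈ B(H) be self-adjoint operators with spectra contained in J. Then f(Σᵢ₌₁ⁿ Φᵢ(Aᵢ)) ≤ Σᵢ₌₁ⁿ Φᵢ(f(Aᵢ)) in the Loewner order. -/
/-! Outline of the proof.

*Finite-dimensional core.* Suppose `c j` are positive semidefinite matrices with diagonal sum and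
diagonal barycentre `∑ j, lam j * c j`. Factoring `c j = Bⱼ* Bⱼ` realises them by a diagonal operator
`X` with eigenvalues `lam j` on a larger space and a subspace `V` to which the compression of `X` is
diagonal. If `Z` is the reflection in `V`, the average of `X` and `Z X Z` commutes with the projection
onto `V` and restricts there to this compression, so convexity at the midpoint of `X` and `Z X Z`
gives Jensen's inequality for the compression (`hp_compress`, `hp_matrix`). Only finite-dimensional
spaces occur here, so the universe in which convexity is assumed does not matter.

*Reduction to the core.* A partition of unity on the union `S` of the spectra of the `A i`, with nodes
`lam j ∈ S` and exact barycentre, replaces the data `Φ i`, `A i` by positive operators `C j` on `K` with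
`∑ C j = 1` and `∑ lam j • C j = T`, where `T = ∑ Φ i (A i)` (`hp_povm`). On the side of `T`, a
vector `x` is cut into pieces `y k` by the spectral subspaces of `T`, obtained as kernels of `(T - c)₊`
(`hp_decomp`). The matrices `⟨y k, C j y l⟩` then have diagonal sum and barycentre.

*Sets without convexity.* Nothing forces `J` to be an interval, and `f` is only controlled on
`J` and on the spectrum of `T`. If `f` is continuous on the spectrum of `T`, the mean of `T` at `y k`
is moved onto the spectrum by adding a small mass at the extreme points `a`, `b` of `S` (`hp_adjust`);
letting this mass tend to `0` gives the inequality (`hp_estimate`). If `f` is not continuous on the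
spectrum of `T`, the left-hand side is the default value `0` of `cfc`, and `f` must be nonnegative on
`S`: a value `f b < 0` forces continuity of `f` on every segment joining `b` to a point of `J`
(`hp_continuousOn_of_neg`).
-/

open scoped ComplexInnerProductSpace

universe u

/-- The operator convexity hypothesis: the convexity inequality for all self-adjoint operators with
spectra in `J` on all Hilbert spaces in `Type u`. The set `J` is arbitrary, and `cfc f` is `0` at an
operator on whose spectrum `f` is not continuous. -/
def HPConvexOn (J : Set ℝ) (f : ℝ → ℝ) : Prop :=
  ∀ (E : Type u) [NormedAddCommGroup E] [InnerProductSpace ℂ E] [CompleteSpace E],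
    ∀ A B : E →L[ℂ] E, IsSelfAdjoint A → IsSelfAdjoint B →
      spectrum ℝ A ⊆ J → spectrum ℝ B ⊆ J → ∀ v : ℝ, 0 < v → v < 1 →
        cfc f ((1 - v) • A + v • B) ≤ (1 - v) • cfc f A + v • cfc f B

/-! ### Quadratic forms and eigenvectors -/

section
variable {K : Type*} [NormedAddCommGroup K] [InnerProductSpace ℂ K]

lemma hp_quad_mono {S T : K →L[ℂ] K} (h : S ≤ T) (x : K) :
    S.reApplyInnerSelf x ≤ T.reApplyInnerSelf x := by
  have := ((ContinuousLinearMap.le_def S T).1 h).re_inner_nonneg_left x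
  simp only [sub_apply, inner_sub_left, map_sub] at this
  simp only [ContinuousLinearMap.reApplyInnerSelf]
  linarith

lemma hp_quad_add (S T : K →L[ℂ] K) (x : K) :
    (S + T).reApplyInnerSelf x = S.reApplyInnerSelf x + T.reApplyInnerSelf x := by
  simp [ContinuousLinearMap.reApplyInnerSelf, inner_add_left]

lemma hp_quad_smul (r : ℝ) (T : K →L[ℂ] K) (x : K) :
    (r • T).reApplyInnerSelf x = r * T.reApplyInnerSelf x := by
  simp [ContinuousLinearMap.reApplyInnerSelf, inner_smul_left_eq_smul]

lemma hp_quad_one (x : K) : (1 : K →L[ℂ] K).reApplyInnerSelf x = ‖x‖ ^ 2 :=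
  inner_self_eq_norm_sq (𝕜 := ℂ) x

/-- An eigenvalue with a nonzero eigenvector is in the real spectrum. -/
lemma hp_mem_spectrum {T : K →L[ℂ] K} {t : ℝ} {v : K} (hv : T v = t • v) (h0 : v ≠ 0) :
    t ∈ spectrum ℝ T := by
  rw [spectrum.mem_iff]
  rintro ⟨w, hw⟩
  apply h0
  have h1 : (algebraMap ℝ (K →L[ℂ] K) t - T) v = 0 := by
    simp [Algebra.algebraMap_eq_smul_one, hv]
  calc v = ((↑w⁻¹ : K →L[ℂ] K) * (w : K →L[ℂ] K)) v := by simp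
    _ = 0 := by rw [hw, mul_apply_eq_comp, h1, map_zero]

/-- If the `y k` are pairwise orthogonal for the sesquilinear form of `T`, the quadratic form of `T`
is additive along them. -/
lemma hp_quad_sum {T : K →L[ℂ] K} {N : ℕ} {y : Fin N → K}
    (h : ∀ k l, k ≠ l → inner ℂ (y k) (T (y l)) = 0) :
    T.reApplyInnerSelf (∑ k, y k) = ∑ k, T.reApplyInnerSelf (y k) := by
  simp only [ContinuousLinearMap.reApplyInnerSelf]
  rw [map_sum, sum_inner, map_sum]
  refine Finset.sum_congr rfl fun k _ => ?_
  rw [inner_sum, Finset.sum_eq_single k]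
  · intro l _ hl
    rw [← inner_conj_symm, h l k hl, map_zero]
  · simp

end

section
variable {K : Type*} [NormedAddCommGroup K] [InnerProductSpace ℂ K] [CompleteSpace K]

lemma hp_le_of_quad {S T : K →L[ℂ] K} (hS : IsSelfAdjoint S) (hT : IsSelfAdjoint T)
    (h : ∀ x, S.reApplyInnerSelf x ≤ T.reApplyInnerSelf x) : S ≤ T := by
  rw [ContinuousLinearMap.le_def, ContinuousLinearMap.isPositive_def']
  refine ⟨hT.sub hS, fun x => ?_⟩
  have := h x
  simp only [ContinuousLinearMap.reApplyInnerSelf, sub_apply, inner_sub_left,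
    map_sub] at this ⊢
  linarith

/-- Support lemma. If `h ≥ 0` on the spectrum and the quadratic form of `h(T)` vanishes at `y`, then
`y` only sees the zero set of `h`: a function `g` which is nonpositive there has
`⟨g(T) y, y⟩ ≤ 0`. By compactness `g ≤ ε + C h` on the spectrum for every `ε > 0` and a suitable
`C`. This replaces spectral projections, which the continuous functional calculus does not give. -/
lemma hp_support {T : K →L[ℂ] K} (hT : IsSelfAdjoint T) {g h : ℝ → ℝ}
    (hg : ContinuousOn g (spectrum ℝ T)) (hh : ContinuousOn h (spectrum ℝ T))
    (h0 : ∀ t ∈ spectrum ℝ T, 0 ≤ h t) (y : K) (hy : (cfc h T).reApplyInnerSelf y = 0)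
    (hgh : ∀ t ∈ spectrum ℝ T, h t = 0 → g t ≤ 0) :
    (cfc g T).reApplyInnerSelf y ≤ 0 := by
  have hK : IsCompact (spectrum ℝ T) := ContinuousFunctionalCalculus.isCompact_spectrum T
  have key : ∀ ε > 0, ∃ C : ℝ, ∀ t ∈ spectrum ℝ T, g t ≤ ε + C * h t := by
    intro ε hε
    have hS : IsCompact (spectrum ℝ T ∩ g ⁻¹' Set.Ici ε) :=
      hK.of_isClosed_subset (hg.preimage_isClosed_of_isClosed hK.isClosed isClosed_Ici)
        Set.inter_subset_left
    rcases (spectrum ℝ T ∩ g ⁻¹' Set.Ici ε).eq_empty_or_nonempty with he | hne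
    · refine ⟨0, fun t ht => ?_⟩
      by_contra hc
      have : t ∈ spectrum ℝ T ∩ g ⁻¹' Set.Ici ε := ⟨ht, by simp at hc ⊢; linarith⟩
      simp [he] at this
    · obtain ⟨p, hp, hpm⟩ := hS.exists_isMinOn hne (hh.mono Set.inter_subset_left)
      obtain ⟨q, hq, hqm⟩ := hS.exists_isMaxOn hne (hg.mono Set.inter_subset_left)
      have hp0 : 0 < h p := by
        refine lt_of_le_of_ne (h0 p hp.1) fun h => ?_
        have := hgh p hp.1 h.symm
        have h2 : ε ≤ g p := hp.2
        linarith
      have hq0 : 0 ≤ g q := le_trans hε.le hq.2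
      refine ⟨g q / h p, fun t ht => ?_⟩
      by_cases hc : ε ≤ g t
      · have h1 : h p ≤ h t := hpm ⟨ht, hc⟩
        have h2 : g t ≤ g q := hqm ⟨ht, hc⟩
        have h3 : g q ≤ g q / h p * h t := by
          rw [div_mul_eq_mul_div, le_div_iff₀ hp0]
          exact mul_le_mul_of_nonneg_left h1 hq0
        linarith
      · have := mul_nonneg (div_nonneg hq0 hp0.le) (h0 t ht)
        linarith
  have key2 : ∀ ε > 0, (cfc g T).reApplyInnerSelf y ≤ ε * ‖y‖ ^ 2 := by
    intro ε hε
    obtain ⟨C, hC⟩ := key ε hε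
    have h1 : cfc g T ≤ cfc (fun t => ε + C * h t) T := cfc_mono hC
    have h2 : cfc (fun t => ε + C * h t) T = ε • (1 : K →L[ℂ] K) + C • cfc h T := by
      rw [cfc_const_add ε _ T, cfc_const_mul C h T, Algebra.algebraMap_eq_smul_one]
    have := hp_quad_mono h1 y
    rw [h2, hp_quad_add, hp_quad_smul, hp_quad_smul, hy, hp_quad_one] at this
    linarith
  have : Filter.Tendsto (fun ε : ℝ => ε * ‖y‖ ^ 2) (nhdsWithin 0 (Set.Ioi 0)) (nhds 0) := by
    have : Filter.Tendsto (fun ε : ℝ => ε * ‖y‖ ^ 2) (nhds 0) (nhds (0 * ‖y‖ ^ 2)) :=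
      (continuous_id.mul continuous_const).tendsto 0
    rw [zero_mul] at this
    exact this.mono_left nhdsWithin_le_nhds
  exact ge_of_tendsto this (eventually_nhdsWithin_of_forall fun ε hε => key2 ε hε)

/-- For a self-adjoint operator the quadratic form of a square is a squared norm. -/
lemma hp_quad_sq {T : K →L[ℂ] K} (hT : IsSelfAdjoint T) (x : K) :
    (T * T).reApplyInnerSelf x = ‖T x‖ ^ 2 := by
  have h : (T * T) x = (ContinuousLinearMap.adjoint T) (T x) := by
    rw [hT.adjoint_eq]; rfl
  rw [ContinuousLinearMap.reApplyInnerSelf, h, ContinuousLinearMap.adjoint_inner_left]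
  exact inner_self_eq_norm_sq (𝕜 := ℂ) (T x)

/-- Functional calculus on an eigenvector; the point is that `t` need not be known to lie in the
spectrum, so that `v = 0` is allowed. -/
lemma hp_eig {T : K →L[ℂ] K} (hT : IsSelfAdjoint T) {f : ℝ → ℝ}
    (hf : ContinuousOn f (spectrum ℝ T)) {t : ℝ} {v : K} (hv : T v = t • v) :
    cfc f T v = f t • v := by
  have hsq : ∀ g : ℝ → ℝ, ContinuousOn g (spectrum ℝ T) →
      (cfc (fun x => (g x - g t) * (g x - g t)) T).reApplyInnerSelf v =
        ‖cfc g T v - g t • v‖ ^ 2 := by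
    intro g hg
    have h1 : cfc (fun x => g x - g t) T = cfc g T - g t • (1 : K →L[ℂ] K) := by
      rw [cfc_sub g (fun _ => g t) T, cfc_const _ T, Algebra.algebraMap_eq_smul_one]
    rw [cfc_mul (fun x => g x - g t) (fun x => g x - g t) T, hp_quad_sq (cfc_predicate _ _), h1]
    simp
  have h1 := hsq (fun x => x) continuousOn_id
  rw [cfc_id' ℝ T, hv, sub_self, norm_zero, zero_pow two_ne_zero] at h1
  have h2 := hp_support hT (g := fun x => (f x - f t) * (f x - f t))
    (h := fun x => (x - t) * (x - t)) (by fun_prop) (by fun_prop)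
    (fun x _ => mul_self_nonneg _) v h1 (by
      intro x _ hx
      have : x = t := by nlinarith [mul_self_eq_zero.1 hx]
      simp [this])
  rw [hsq f hf] at h2
  have : ‖cfc f T v - f t • v‖ = 0 := by
    have := sq_nonneg ‖cfc f T v - f t • v‖
    exact pow_eq_zero_iff two_ne_zero |>.1 (le_antisymm h2 this)
  exact sub_eq_zero.1 (norm_eq_zero.1 this)

end

/-! ### Spectral subspaces and decomposition of a vector -/

section
variable {K : Type*} [NormedAddCommGroup K] [InnerProductSpace ℂ K] [CompleteSpace K]

/-- The spectral subspace of `T` for `(-∞, c]`, realised as the kernel of `(T - c)₊`. -/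
noncomputable def hpSpec (T : K →L[ℂ] K) (c : ℝ) : Submodule ℂ K :=
  LinearMap.ker ((cfc (fun t : ℝ => max (t - c) 0) T : K →L[ℂ] K) : K →ₗ[ℂ] K)

lemma hpSpec_mem {T : K →L[ℂ] K} {c : ℝ} {y : K} :
    y ∈ hpSpec T c ↔ cfc (fun t : ℝ => max (t - c) 0) T y = 0 := Iff.rfl

instance hpSpec_complete (T : K →L[ℂ] K) (c : ℝ) : CompleteSpace (hpSpec T c) :=
  (ContinuousLinearMap.isClosed_ker (cfc (fun t : ℝ => max (t - c) 0) T)).completeSpace_coe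

lemma hpSpec_invariant {T : K →L[ℂ] K} {c : ℝ} {y : K} (hy : y ∈ hpSpec T c) (g : ℝ → ℝ) :
    cfc g T y ∈ hpSpec T c := by
  rw [hpSpec_mem] at hy ⊢
  have h := (cfc_commute_cfc (fun t : ℝ => max (t - c) 0) g T).eq
  have h2 := congrArg (fun S : K →L[ℂ] K => S y) h
  simp only [mul_apply_eq_comp, hy, map_zero] at h2
  exact h2

lemma hpSpec_mono {T : K →L[ℂ] K} (hT : IsSelfAdjoint T) {c d : ℝ} (hcd : c ≤ d) :
    hpSpec T c ≤ hpSpec T d := by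
  intro y hy
  rw [hpSpec_mem] at hy ⊢
  have h := hp_support hT (g := fun t => max (t - d) 0 * max (t - d) 0)
    (h := fun t => max (t - c) 0) (by fun_prop) (by fun_prop) (fun t _ => le_max_right _ _) y
    (by simp [ContinuousLinearMap.reApplyInnerSelf, hy]) (by
      intro t _ ht
      have h1 : t - c ≤ 0 := by rw [← ht]; exact le_max_left _ _
      rw [max_eq_right (by linarith : t - d ≤ 0)]; simp)
  rw [cfc_mul (fun t => max (t - d) 0) (fun t => max (t - d) 0) T,
    hp_quad_sq (cfc_predicate _ _)] at h
  have := sq_nonneg ‖cfc (fun t : ℝ => max (t - d) 0) T y‖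
  exact norm_eq_zero.1 ((pow_eq_zero_iff two_ne_zero).1 (le_antisymm h this))

/-- The orthogonal complement of the spectral subspace lies in the kernel of `(c - T)₊`, because
`(t - c)₊ (c - t)₊ = 0`. -/
lemma hpSpec_orthogonal {T : K →L[ℂ] K} {c : ℝ} {y : K} (hy : y ∈ (hpSpec T c)ᗮ) :
    cfc (fun t : ℝ => max (c - t) 0) T y = 0 := by
  rw [← inner_self_eq_zero (𝕜 := ℂ)]
  have hsa : IsSelfAdjoint (cfc (fun t : ℝ => max (c - t) 0) T) := cfc_predicate _ _
  conv_lhs => rw [← ContinuousLinearMap.adjoint_inner_right, hsa.adjoint_eq]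
  refine (Submodule.mem_orthogonal' _ _).1 hy _ ?_
  rw [hpSpec_mem, ← mul_apply_eq_comp, ← cfc_mul _ _ T]
  have : (fun t : ℝ => max (t - c) 0 * max (c - t) 0) = fun _ => 0 := by
    funext t
    rcases le_total t c with h | h
    · rw [max_eq_right (by linarith : t - c ≤ 0), zero_mul]
    · rw [max_eq_right (by linarith : c - t ≤ 0), mul_zero]
  rw [this]
  simp

/-- A vector in the spectral subspace of `(c, d]` sees only the values of `g` on `[c, d]`. -/
lemma hpSpec_window {T : K →L[ℂ] K} (hT : IsSelfAdjoint T) {c d : ℝ} {y : K}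
    (hd : y ∈ hpSpec T d) (hc : y ∈ (hpSpec T c)ᗮ) {g : ℝ → ℝ}
    (hg : ContinuousOn g (spectrum ℝ T)) (h : ∀ t ∈ spectrum ℝ T, c ≤ t → t ≤ d → g t ≤ 0) :
    (cfc g T).reApplyInnerSelf y ≤ 0 := by
  refine hp_support hT (h := fun t => max (t - d) 0 + max (c - t) 0) hg (by fun_prop)
    (fun t _ => by positivity) y ?_ ?_
  · rw [cfc_add (a := T) (fun t : ℝ => max (t - d) 0) (fun t : ℝ => max (c - t) 0), hp_quad_add]
    simp [ContinuousLinearMap.reApplyInnerSelf, hpSpec_mem.1 hd, hpSpec_orthogonal hc]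
  · intro t ht h0
    have h1 := le_max_left (t - d) 0
    have h2 := le_max_left (c - t) 0
    have h3 := le_max_right (t - d) 0
    have h4 := le_max_right (c - t) 0
    exact h t ht (by linarith) (by linarith)

/-- Discretised spectral theorem: `x` splits into finitely many pieces `y k`, orthogonal for every
`g(T)`, each of which sees only a window `[lo, hi]` of width at most `δ` whose endpoints belong to
the spectrum. -/
lemma hp_decomp {T : K →L[ℂ] K} (hT : IsSelfAdjoint T) (x : K) {δ : ℝ} (hδ : 0 < δ) :
    ∃ (N : ℕ) (y : Fin N → K), ∑ k, y k = x ∧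
      (∀ k l, k ≠ l → ∀ g : ℝ → ℝ, inner ℂ (y k) (cfc g T (y l)) = 0) ∧
      ∀ k, y k ≠ 0 → ∃ lo ∈ spectrum ℝ T, ∃ hi ∈ spectrum ℝ T, lo ≤ hi ∧ hi - lo ≤ δ ∧
        ∀ g : ℝ → ℝ, ContinuousOn g (spectrum ℝ T) →
          (∀ t ∈ spectrum ℝ T, lo ≤ t → t ≤ hi → g t ≤ 0) →
          (cfc g T).reApplyInnerSelf (y k) ≤ 0 := by
  -- the margin `1` makes the lowest cut `c 0` lie strictly below the spectrum
  set R : ℝ := ‖T‖ + 1 with hR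
  obtain ⟨N, hN⟩ := exists_nat_ge (2 * R / δ)
  have hspec : ∀ t ∈ spectrum ℝ T, |t| ≤ ‖T‖ := by
    intro t ht
    rcases subsingleton_or_nontrivial K with h | h
    · have : spectrum ℝ T = ∅ := spectrum.of_subsingleton T
      rw [this] at ht; exact ht.elim
    · exact spectrum.norm_le_norm_of_mem ht
  let c : ℕ → ℝ := fun k => -R + k * δ
  have hc : Monotone c := by
    intro k l hkl
    have : (k : ℝ) ≤ l := by exact_mod_cast hkl
    simp only [c]
    nlinarith
  have hcN : R ≤ c N := by
    have := (div_le_iff₀ hδ).1 hN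
    simp only [c]; linarith
  let Q : ℕ → K := fun k => (hpSpec T (c k)).starProjection x
  have hQ0 : Q 0 = 0 := by
    have hmem : Q 0 ∈ hpSpec T (c 0) := Submodule.starProjection_apply_mem _ x
    have h1 := hp_support hT (g := fun _ => 1) (h := fun t => max (t - c 0) 0) (by fun_prop)
      (by fun_prop) (fun t _ => le_max_right _ _) (Q 0)
      (by simp [ContinuousLinearMap.reApplyInnerSelf, hpSpec_mem.1 hmem]) (by
        intro t ht h0
        have h1 : t - c 0 ≤ 0 := by rw [← h0]; exact le_max_left _ _
        have h2 := abs_le.1 (hspec t ht)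
        simp only [c, hR] at h1
        simp at h1
        linarith)
    rw [cfc_const_one ℝ T, hp_quad_one] at h1
    exact norm_eq_zero.1 ((pow_eq_zero_iff two_ne_zero).1 (le_antisymm h1 (sq_nonneg _)))
  have hQN : Q N = x := by
    refine Submodule.starProjection_eq_self_iff.2 ?_
    rw [hpSpec_mem]
    have : cfc (fun t : ℝ => max (t - c N) 0) T = cfc (fun _ : ℝ => (0 : ℝ)) T := by
      refine cfc_congr fun t ht => ?_
      have h2 := abs_le.1 (hspec t ht)
      exact max_eq_right (by linarith)
    rw [this]
    simp
  have hmem : ∀ k, Q (k + 1) - Q k ∈ hpSpec T (c (k + 1)) := fun k =>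
    Submodule.sub_mem _ (Submodule.starProjection_apply_mem _ x)
      (hpSpec_mono hT (hc (Nat.le_succ k)) (Submodule.starProjection_apply_mem _ x))
  have horth : ∀ k, Q (k + 1) - Q k ∈ (hpSpec T (c k))ᗮ := by
    intro k
    have h1 := Submodule.starProjection_comp_starProjection_of_le
      (hpSpec_mono hT (hc (Nat.le_succ k)))
    have h2 : Q k = (hpSpec T (c k)).starProjection (Q (k + 1)) := by
      exact (congrArg (fun S : K →L[ℂ] K => S x) h1).symm
    rw [h2]
    exact Submodule.sub_starProjection_mem_orthogonal _
  refine ⟨N, fun k => Q (k + 1) - Q k, ?_, ?_, ?_⟩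
  · rw [Fin.sum_univ_eq_sum_range (fun k => Q (k + 1) - Q k), Finset.sum_range_sub, hQ0, hQN,
      sub_zero]
  · intro k l hkl g
    have hsa : IsSelfAdjoint (cfc g T) := cfc_predicate _ _
    rcases lt_or_gt_of_ne hkl with h | h
    · rw [← ContinuousLinearMap.adjoint_inner_left, hsa.adjoint_eq]
      refine (Submodule.mem_orthogonal _ _).1 (horth l) _ (hpSpec_invariant ?_ g)
      exact hpSpec_mono hT (hc (Nat.succ_le_of_lt h)) (hmem k)
    · refine (Submodule.mem_orthogonal' _ _).1 (horth k) _ (hpSpec_invariant ?_ g)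
      exact hpSpec_mono hT (hc (Nat.succ_le_of_lt h)) (hmem l)
  · intro k hk
    have hcpt : IsCompact (spectrum ℝ T ∩ Set.Icc (c k) (c (k + 1))) :=
      (ContinuousFunctionalCalculus.isCompact_spectrum T).inter_right isClosed_Icc
    have hne : (spectrum ℝ T ∩ Set.Icc (c k) (c (k + 1))).Nonempty := by
      by_contra hcon
      rw [Set.not_nonempty_iff_eq_empty] at hcon
      have h1 := hpSpec_window hT (hmem k) (horth k) (g := fun _ => 1) (by fun_prop) (by
        intro t ht h1 h2
        have : t ∈ spectrum ℝ T ∩ Set.Icc (c k) (c (k + 1)) := ⟨ht, h1, h2⟩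
        simp [hcon] at this)
      rw [cfc_const_one ℝ T, hp_quad_one] at h1
      exact hk (norm_eq_zero.1 ((pow_eq_zero_iff two_ne_zero).1 (le_antisymm h1 (sq_nonneg _))))
    obtain ⟨lo, hlo, hlo'⟩ := hcpt.exists_isLeast hne
    obtain ⟨hi, hhi, hhi'⟩ := hcpt.exists_isGreatest hne
    refine ⟨lo, hlo.1, hi, hhi.1, hlo' hhi, ?_, ?_⟩
    · have h1 := hlo.2.1
      have h2 := hhi.2.2
      simp only [c] at h1 h2
      push_cast at h2
      linarith
    · intro g hg h
      exact hpSpec_window hT (hmem k) (horth k) hg fun t ht h1 h2 =>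
        h t ht (hlo' ⟨ht, h1, h2⟩) (hhi' ⟨ht, h1, h2⟩)

end

/-! ### Partitions of unity with exact barycentre -/

/-- Every point of `S` has a neighbourhood `U` such that `S ∩ U` lies between two points of `S` at
distance at most `δ`. -/
lemma hp_local_nodes {S : Set ℝ} {δ : ℝ} (hδ : 0 < δ) {t₀ : ℝ} (h₀ : t₀ ∈ S) :
    ∃ p ∈ S, ∃ q ∈ S, ∃ U : Set ℝ, IsOpen U ∧ t₀ ∈ U ∧ q - p ≤ δ ∧
      ∀ t ∈ S, t ∈ U → p ≤ t ∧ t ≤ q := by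
  have hL : ∃ p ∈ S, ∃ L < t₀, t₀ - δ / 2 ≤ p ∧ p ≤ t₀ ∧ ∀ t ∈ S, L < t → p ≤ t := by
    by_cases h : ∃ s ∈ S, t₀ - δ / 2 < s ∧ s < t₀
    · obtain ⟨s, hs, h1, h2⟩ := h
      exact ⟨s, hs, s, h2, h1.le, h2.le, fun t _ ht => ht.le⟩
    · push Not at h
      exact ⟨t₀, h₀, t₀ - δ / 2, by linarith, by linarith, le_rfl, fun t ht h1 => h t ht h1⟩
  have hR : ∃ q ∈ S, ∃ R > t₀, q ≤ t₀ + δ / 2 ∧ t₀ ≤ q ∧ ∀ t ∈ S, t < R → t ≤ q := by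
    by_cases h : ∃ s ∈ S, s < t₀ + δ / 2 ∧ t₀ < s
    · obtain ⟨s, hs, h1, h2⟩ := h
      exact ⟨s, hs, s, h2, h1.le, h2.le, fun t _ ht => ht.le⟩
    · push Not at h
      exact ⟨t₀, h₀, t₀ + δ / 2, by linarith, by linarith, le_rfl, fun t ht h1 => h t ht h1⟩
  obtain ⟨p, hp, L, hL, hp1, -, hp2⟩ := hL
  obtain ⟨q, hq, R, hR, hq1, -, hq2⟩ := hR
  exact ⟨p, hp, q, hq, Set.Ioo L R, isOpen_Ioo, ⟨hL, hR⟩, by linarith,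
    fun t ht htU => ⟨hp2 t ht htU.1, hq2 t ht htU.2⟩⟩

/-- A continuous partition of unity on `S` by functions `g j` concentrated near nodes `lam j ∈ S`,
with *exact* barycentre `∑ j, lam j * g j t = t`. It is obtained from an ordinary partition of unity
by splitting each piece between the two nodes given by `hp_local_nodes`. -/
lemma hp_nodes {S : Set ℝ} (hS : IsCompact S) {δ : ℝ} (hδ : 0 < δ) :
    ∃ (ι : Type) (_ : Fintype ι) (lam : ι → ℝ) (g : ι → ℝ → ℝ), (∀ j, lam j ∈ S) ∧
      (∀ j, Continuous (g j)) ∧ (∀ j, ∀ t ∈ S, 0 ≤ g j t) ∧ (∀ t ∈ S, ∑ j, g j t = 1) ∧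
      (∀ t ∈ S, ∑ j, lam j * g j t = t) ∧ ∀ j, ∀ t ∈ S, g j t ≠ 0 → |lam j - t| ≤ δ := by
  choose! p hp q hq U hUo hU hpq hloc using
    fun (t₀ : ℝ) (h₀ : t₀ ∈ S) => hp_local_nodes hδ h₀
  obtain ⟨F, hF⟩ := hS.elim_nhds_subcover' (fun t _ => U t)
    (fun t ht => (hUo t ht).mem_nhds (hU t ht))
  let e := F.equivFin
  let c : Fin F.card → ℝ := fun i => ((e.symm i : S) : ℝ)
  have hc : ∀ i, c i ∈ S := fun i => (e.symm i : S).2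
  obtain ⟨ρ, hρU, hρ1, hρ0, -⟩ := exists_continuous_sum_one_of_isOpen_isCompact
    (s := fun i => U (c i)) (fun i => hUo _ (hc i)) hS (by
      intro t ht
      obtain ⟨s, hs, hst⟩ := Set.mem_iUnion₂.1 (hF ht)
      refine Set.mem_iUnion.2 ⟨e ⟨s, hs⟩, ?_⟩
      simpa [c] using hst)
  -- barycentric coordinate of `t` in `[p, q]`; for `p = q` the convention `x / 0 = 0` is harmless
  let w : Fin F.card → ℝ → ℝ := fun i t => (t - p (c i)) / (q (c i) - p (c i))
  have hw : ∀ i, ∀ t ∈ S, ρ i t ≠ 0 → p (c i) ≤ t ∧ t ≤ q (c i) := by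
    intro i t ht h
    exact hloc _ (hc i) t ht (hρU i (subset_tsupport _ h))
  have hw01 : ∀ i, ∀ t ∈ S, ρ i t ≠ 0 → 0 ≤ w i t ∧ w i t ≤ 1 := by
    intro i t ht h
    obtain ⟨h1, h2⟩ := hw i t ht h
    exact ⟨div_nonneg (by linarith) (by linarith), div_le_one_of_le₀ (by linarith) (by linarith)⟩
  have hbar : ∀ i, ∀ t ∈ S, ρ i t ≠ 0 → p (c i) * (1 - w i t) + q (c i) * w i t = t := by
    intro i t ht h
    obtain ⟨h1, h2⟩ := hw i t ht h
    rcases eq_or_ne (q (c i) - p (c i)) 0 with h0 | h0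
    · simp only [w, h0, div_zero]
      linarith
    · simp only [w]
      field_simp
      ring
  have hsum : ∀ t ∈ S, ∑ i, ρ i t = 1 := by
    intro t ht
    simpa using hρ1 ht
  refine ⟨Fin F.card × Bool, inferInstance,
    fun j => if j.2 then q (c j.1) else p (c j.1),
    fun j t => ρ j.1 t * (if j.2 then w j.1 t else 1 - w j.1 t), ?_, ?_, ?_, ?_, ?_, ?_⟩
  · rintro ⟨i, b⟩
    cases b
    · simpa using hp _ (hc i)
    · simpa using hq _ (hc i)
  · rintro ⟨i, b⟩
    cases b <;> simp [w] <;> fun_prop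
  · rintro ⟨i, b⟩ t ht
    rcases eq_or_ne (ρ i t) 0 with h | h
    · simp [h]
    · have h1 := hw01 i t ht h
      refine mul_nonneg (hρ0 i t).1 ?_
      cases b
      · simpa using h1.2
      · simpa using h1.1
  · intro t ht
    rw [Fintype.sum_prod_type]
    calc _ = ∑ i, ρ i t := by
          refine Finset.sum_congr rfl fun i _ => ?_
          simp
          ring
      _ = 1 := hsum t ht
  · intro t ht
    rw [Fintype.sum_prod_type]
    calc _ = ∑ i, ρ i t * t := by
          refine Finset.sum_congr rfl fun i _ => ?_
          rcases eq_or_ne (ρ i t) 0 with h | h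
          · simp [h]
          · have h1 := hbar i t ht h
            simp
            linear_combination (ρ i t) * h1
      _ = t := by rw [← Finset.sum_mul, hsum t ht, one_mul]
  · rintro ⟨i, b⟩ t ht h
    have h1 := left_ne_zero_of_mul h
    obtain ⟨h2, h3⟩ := hw i t ht h1
    have h4 := hpq _ (hc i)
    cases b
    · simp only [Bool.false_eq_true, if_false]
      rw [abs_le]; constructor <;> linarith
    · simp only [if_true]
      rw [abs_le]; constructor <;> linarith

section
variable {H K : Type*} [NormedAddCommGroup H] [InnerProductSpace ℂ H] [CompleteSpace H]
  [NormedAddCommGroup K] [InnerProductSpace ℂ K] [CompleteSpace K]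

/-- Replacing the operators `A i` by finitely many scalars: there are positive operators `C j` on `K`
with sum `1` and barycentre `∑ i, Φ i (A i)` exactly, for which `∑ j, f (lam j) • C j` exceeds
`∑ i, Φ i (f (A i))` by at most `ε`. -/
lemma hp_povm {f : ℝ → ℝ} {n : ℕ} (Φ : Fin n → (H →L[ℂ] H) →ₗ[ℂ] (K →L[ℂ] K))
    (hΦpos : ∀ i, ∀ T : H →L[ℂ] H, 0 ≤ T → 0 ≤ Φ i T) (hΦunital : ∑ i, Φ i 1 = 1)
    (A : Fin n → H →L[ℂ] H) (hA : ∀ i, IsSelfAdjoint (A i)) {S : Set ℝ} (hS : IsCompact S)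
    (hAS : ∀ i, spectrum ℝ (A i) ⊆ S) (hf : ContinuousOn f S) {ε : ℝ} (hε : 0 < ε) :
    ∃ (ι : Type) (_ : Fintype ι) (lam : ι → ℝ) (C : ι → K →L[ℂ] K), (∀ j, lam j ∈ S) ∧
      (∀ j, 0 ≤ C j) ∧ ∑ j, C j = 1 ∧ ∑ j, lam j • C j = ∑ i, Φ i (A i) ∧
      ∑ j, f (lam j) • C j ≤ ∑ i, Φ i (cfc f (A i)) + ε • (1 : K →L[ℂ] K) := by
  have hmono : ∀ i, ∀ X Y : H →L[ℂ] H, X ≤ Y → Φ i X ≤ Φ i Y := by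
    intro i X Y h
    have := hΦpos i (Y - X) (sub_nonneg.2 h)
    rwa [map_sub, sub_nonneg] at this
  have hsmul : ∀ i (r : ℝ) (X : H →L[ℂ] H), Φ i (r • X) = r • Φ i X := fun i r X =>
    (Φ i).map_smul_of_tower r X
  obtain ⟨δ, hδ, hfδ⟩ := Metric.uniformContinuousOn_iff_le.1
    (hS.uniformContinuousOn_of_continuous hf) ε hε
  obtain ⟨ι, _, lam, g, hlam, hgc, hg0, hg1, hgt, hgδ⟩ := hp_nodes hS hδ
  have hcomb : ∀ (r : ι → ℝ) (i : Fin n),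
      ∑ j, r j • cfc (g j) (A i) = cfc (fun t => ∑ j, r j * g j t) (A i) := by
    intro r i
    have hgc' := fun j => (hgc j).continuousOn (s := spectrum ℝ (A i))
    have h1 : (fun t => ∑ j, r j * g j t) = ∑ j, fun t => r j * g j t := by
      funext t; simp
    rw [h1, cfc_sum_univ (fun j t => r j * g j t) (A i) (fun j => by have := hgc j; fun_prop)]
    exact Finset.sum_congr rfl fun j _ => (cfc_const_mul (r j) (g j) (A i) (hgc' j)).symm
  have hswap : ∀ r : ι → ℝ, ∑ j, r j • ∑ i, Φ i (cfc (g j) (A i)) =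
      ∑ i, Φ i (cfc (fun t => ∑ j, r j * g j t) (A i)) := by
    intro r
    simp_rw [Finset.smul_sum]
    rw [Finset.sum_comm]
    refine Finset.sum_congr rfl fun i _ => ?_
    rw [← hcomb, map_sum]
    simp_rw [hsmul]
  refine ⟨ι, inferInstance, lam, fun j => ∑ i, Φ i (cfc (g j) (A i)), hlam, ?_, ?_, ?_, ?_⟩
  · intro j
    exact Finset.sum_nonneg fun i _ => hΦpos i _ (cfc_nonneg fun t ht => hg0 j t (hAS i ht))
  · have h := hswap fun _ => 1
    simp only [one_smul, one_mul] at h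
    rw [h, ← hΦunital]
    refine Finset.sum_congr rfl fun i _ => ?_
    rw [cfc_congr (g := fun _ => 1) fun t ht => hg1 t (hAS i ht), cfc_const_one ℝ (A i)]
  · rw [hswap]
    refine Finset.sum_congr rfl fun i _ => ?_
    rw [cfc_congr (g := fun t => t) fun t ht => hgt t (hAS i ht), cfc_id' ℝ (A i)]
  · rw [hswap fun j => f (lam j)]
    calc ∑ i, Φ i (cfc (fun t => ∑ j, f (lam j) * g j t) (A i))
        ≤ ∑ i, (Φ i (cfc f (A i)) + ε • Φ i 1) := by
          refine Finset.sum_le_sum fun i _ => ?_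
          rw [← hsmul, ← map_add]
          apply hmono
          have hfi := hf.mono (hAS i)
          have h1 : cfc f (A i) + ε • (1 : H →L[ℂ] H) = cfc (fun t => f t + ε) (A i) := by
            rw [cfc_add_const ε f (A i), Algebra.algebraMap_eq_smul_one]
          rw [h1]
          refine cfc_mono (fun t ht => ?_)
            (by have := hgc; fun_prop) (by fun_prop)
          have ht' := hAS i ht
          calc ∑ j, f (lam j) * g j t ≤ ∑ j, (f t + ε) * g j t := by
                refine Finset.sum_le_sum fun j _ => ?_
                rcases eq_or_ne (g j t) 0 with h | h
                · simp [h]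
                · refine mul_le_mul_of_nonneg_right ?_ (hg0 j t ht')
                  have := hfδ _ (hlam j) _ ht' (by rw [Real.dist_eq]; exact hgδ j t ht' h)
                  rw [Real.dist_eq] at this
                  linarith [(abs_le.1 this).2]
            _ = f t + ε := by rw [← Finset.mul_sum, hg1 t ht', mul_one]
      _ = _ := by rw [Finset.sum_add_distrib, ← Finset.smul_sum, hΦunital]
end

/-! ### The finite-dimensional inequality -/

section
variable {E : Type*} [NormedAddCommGroup E] [InnerProductSpace ℂ E]

lemma hp_finite_spectrum [FiniteDimensional ℂ E] (T : E →L[ℂ] E) : (spectrum ℝ T).Finite := by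
  have h1 : (spectrum ℂ T).Finite := by
    have h2 : spectrum ℂ T = spectrum ℂ ((Module.End.toContinuousLinearMap E).symm T) :=
      (AlgEquiv.spectrum_eq (Module.End.toContinuousLinearMap E).symm T).symm
    rw [h2]
    refine (Module.End.finite_hasEigenvalue
      ((Module.End.toContinuousLinearMap E).symm T)).subset fun μ hμ => ?_
    exact Module.End.hasEigenvalue_iff_mem_spectrum.2 hμ
  rw [← spectrum.preimage_algebraMap ℂ]
  exact h1.preimage (Function.Injective.injOn (algebraMap ℝ ℂ).injective)

variable [CompleteSpace E]

/-- Functional calculus commutes with conjugation by a self-adjoint unitary. -/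
lemma hp_conj {Z X : E →L[ℂ] E} (hZ : IsSelfAdjoint Z) (hZZ : Z * Z = 1) (hX : IsSelfAdjoint X)
    {f : ℝ → ℝ} (hf : ContinuousOn f (spectrum ℝ X)) :
    IsSelfAdjoint (Z * X * Z) ∧ spectrum ℝ (Z * X * Z) = spectrum ℝ X ∧
      cfc f (Z * X * Z) = Z * cfc f X * Z := by
  have hsa : IsSelfAdjoint (Z * X * Z) := by
    rw [isSelfAdjoint_iff, star_mul, star_mul, hZ.star_eq, hX.star_eq, mul_assoc]
  refine ⟨hsa, ?_, ?_⟩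
  · exact spectrum.units_conjugate (R := ℝ) (a := X) (u := ⟨Z, Z, hZZ, hZZ⟩)
  · let U : unitary (E →L[ℂ] E) := ⟨Z, by
      rw [Unitary.mem_iff, hZ.star_eq]; exact ⟨hZZ, hZZ⟩⟩
    have hU : ∀ Y : E →L[ℂ] E, Unitary.conjStarAlgAut ℂ (E →L[ℂ] E) U Y = Z * Y * Z := by
      intro Y
      rw [Unitary.conjStarAlgAut_apply]
      simp [U, hZ.star_eq]
    have hc : Continuous (Unitary.conjStarAlgAut ℂ (E →L[ℂ] E) U) := by
      simp_rw [show (⇑(Unitary.conjStarAlgAut ℂ (E →L[ℂ] E) U)) = fun Y => Z * Y * Z from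
        funext hU]
      fun_prop
    have h := StarAlgHomClass.map_cfc (S := ℂ) (Unitary.conjStarAlgAut ℂ (E →L[ℂ] E) U) f X hf hc hX
      (by rw [hU]; exact hsa)
    rw [hU, hU] at h
    exact h.symm
end

/-- Let the vectors `v k` be orthogonal, with `‖v k‖² = n k`, and let the compression of `X` to their
span be diagonal with entries `s k`. Averaging `X` with its conjugate by the reflection `Z` in the
span produces an operator with `v k` as eigenvectors of eigenvalues `s k`, so midpoint convexity
bounds the quadratic form of `f(X)` from below. -/
lemma hp_compress {J : Set ℝ} {f : ℝ → ℝ} (hcont : ContinuousOn f J)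
    (hopconv : HPConvexOn.{u} J f)
    {E : Type u} [NormedAddCommGroup E] [InnerProductSpace ℂ E] [FiniteDimensional ℂ E]
    [CompleteSpace E] {X : E →L[ℂ] E} (hX : IsSelfAdjoint X) (hXJ : spectrum ℝ X ⊆ J)
    {κ : Type} [Fintype κ] [DecidableEq κ] (v : κ → E) (s n : κ → ℝ)
    (hv : ∀ k l, inner ℂ (v k) (v l) = if k = l then (n k : ℂ) else 0)
    (hXv : ∀ k l, inner ℂ (v k) (X (v l)) = if k = l then ((s k * n k : ℝ) : ℂ) else 0) :
    ∑ k, f (s k) * n k ≤ (cfc f X).reApplyInnerSelf (∑ k, v k) := by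
  set V : Submodule ℂ E := Submodule.span ℂ (Set.range v) with hV
  have hvV : ∀ k, v k ∈ V := fun k => Submodule.subset_span ⟨k, rfl⟩
  set P : E →L[ℂ] E := V.starProjection with hP
  have hPP : P * P = P := V.isIdempotentElem_starProjection
  have hPs : IsSelfAdjoint P := isSelfAdjoint_starProjection V
  have hPv : ∀ k, P (v k) = v k := fun k => Submodule.starProjection_eq_self_iff.2 (hvV k)
  -- the compression of `X` to `V` is diagonal in the vectors `v k`
  have hPX : ∀ l, P (X (v l)) = (s l : ℂ) • v l := by
    intro l
    refine (Submodule.eq_starProjection_of_mem_of_inner_eq_zero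
      (Submodule.smul_mem _ _ (hvV l)) ?_)
    intro w hw
    induction hw using Submodule.span_induction with
    | mem w hw =>
      obtain ⟨k, rfl⟩ := hw
      rw [← inner_conj_symm, inner_sub_right, inner_smul_right, hXv, hv]
      split_ifs with h
      · subst h; simp
      · simp
    | zero => simp
    | add x y _ _ hx hy => rw [inner_add_right, hx, hy, add_zero]
    | smul a x _ hx => rw [inner_smul_right, hx, mul_zero]
  set Z : E →L[ℂ] E := (2 : ℝ) • P - 1 with hZ
  have hZs : IsSelfAdjoint Z := ((IsSelfAdjoint.all (2 : ℝ)).smul hPs).sub (IsSelfAdjoint.one _)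
  have hZZ : Z * Z = 1 := by
    simp only [hZ, sub_mul, mul_sub, smul_mul_assoc, mul_smul_comm, hPP, one_mul, mul_one]
    module
  have hZv : ∀ k, Z (v k) = v k := by
    intro k
    simp only [hZ, sub_apply, smul_apply, hPv, one_apply_eq_self]
    module
  have hfX := hcont.mono hXJ
  obtain ⟨hBs, hBspec, hBf⟩ := hp_conj hZs hZZ hX hfX
  have hconv := hopconv E X (Z * X * Z) hX hBs hXJ (hBspec ▸ hXJ) (1 / 2) (by norm_num) (by norm_num)
  set M : E →L[ℂ] E := (1 - 1 / 2 : ℝ) • X + (1 / 2 : ℝ) • (Z * X * Z) with hM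
  have hMs : IsSelfAdjoint M :=
    ((IsSelfAdjoint.all _).smul hX).add ((IsSelfAdjoint.all _).smul hBs)
  have hMv : ∀ k, M (v k) = s k • v k := by
    intro k
    have h1 : Z (X (v k)) = (2 : ℝ) • (s k : ℂ) • v k - X (v k) := by
      simp only [hZ, sub_apply, smul_apply, hPX, one_apply_eq_self]
    simp only [hM, add_apply, smul_apply, mul_apply_eq_comp, hZv, h1]
    rw [Complex.coe_smul]
    module
  have hfM : ContinuousOn f (spectrum ℝ M) := (hp_finite_spectrum M).continuousOn f
  have hfMv : ∀ k, cfc f M (v k) = f (s k) • v k := fun k => hp_eig hMs hfM (hMv k)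
  have h2 := hp_quad_mono hconv (∑ k, v k)
  have hZw : Z (∑ k, v k) = ∑ k, v k := by rw [map_sum]; simp only [hZv]
  have h3 : (Z * cfc f X * Z).reApplyInnerSelf (∑ k, v k) =
      (cfc f X).reApplyInnerSelf (∑ k, v k) := by
    simp only [ContinuousLinearMap.reApplyInnerSelf, mul_apply_eq_comp, hZw]
    rw [← ContinuousLinearMap.adjoint_inner_right, hZs.adjoint_eq, hZw]
  rw [hp_quad_add, hp_quad_smul, hp_quad_smul, hBf, h3] at h2
  have h4 : (cfc f M).reApplyInnerSelf (∑ k, v k) = ∑ k, f (s k) * n k := by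
    rw [ContinuousLinearMap.reApplyInnerSelf, map_sum, sum_inner, map_sum]
    refine Finset.sum_congr rfl fun k _ => ?_
    rw [hfMv, inner_sum, Finset.sum_eq_single k]
    · rw [← Complex.coe_smul, inner_smul_left, hv]
      simp
    · intro l _ h
      rw [← Complex.coe_smul, inner_smul_left, hv, if_neg h.symm, mul_zero]
    · simp
  rw [h4] at h2
  linarith

/-- Diagonal operators and their functional calculus. -/
lemma hp_diag {ι : Type u} [Fintype ι] [DecidableEq ι] (lam : ι → ℝ) :
    ∃ X : EuclideanSpace ℂ ι →L[ℂ] EuclideanSpace ℂ ι, IsSelfAdjoint X ∧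
      (∀ t ∈ spectrum ℝ X, ∃ p, lam p = t) ∧
      (∀ w p, X w p = lam p * w p) ∧
      ∀ f : ℝ → ℝ, ∀ w p, cfc f X w p = f (lam p) * w p := by
  let D : (ι → ℝ) → EuclideanSpace ℂ ι →L[ℂ] EuclideanSpace ℂ ι := fun d =>
    Matrix.toEuclideanCLM (n := ι) (𝕜 := ℂ) (Matrix.diagonal fun p => (d p : ℂ))
  have hD : ∀ d w p, D d w p = d p * w p := by
    intro d w p
    simp [D, Matrix.mulVec_diagonal]
  have hDs : ∀ d, IsSelfAdjoint (D d) := by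
    intro d
    rw [isSelfAdjoint_iff]
    simp only [D]
    rw [← map_star, Matrix.star_eq_conjTranspose, Matrix.diagonal_conjTranspose]
    congr 2
    funext p
    simp
  refine ⟨D lam, hDs lam, ?_, hD lam, ?_⟩
  · intro t ht
    rw [← spectrum.preimage_algebraMap ℂ] at ht
    have h1 : spectrum ℂ (D lam) = Set.range fun p => (lam p : ℂ) := by
      rw [← spectrum_diagonal]
      exact AlgEquiv.spectrum_eq (Matrix.toEuclideanCLM (n := ι) (𝕜 := ℂ)) _
    rw [Set.mem_preimage, h1] at ht
    obtain ⟨p, hp⟩ := ht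
    exact ⟨p, by simpa using hp⟩
  · intro f w p
    have h1 : cfc f (D lam) = D fun p => f (lam p) := by
      have h2 : ∀ q, cfc f (D lam) (EuclideanSpace.single q 1) =
          f (lam q) • EuclideanSpace.single q 1 := by
        intro q
        refine hp_eig (hDs lam) ((hp_finite_spectrum _).continuousOn f) ?_
        ext p
        rw [hD]
        by_cases h : p = q
        · subst h; simp
        · simp [h]
      refine ContinuousLinearMap.coe_injective ((EuclideanSpace.basisFun ι ℂ).toBasis.ext fun q => ?_)
      simp only [OrthonormalBasis.coe_toBasis, EuclideanSpace.basisFun_apply, ContinuousLinearMap.coe_coe]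
      rw [h2]
      ext p
      rw [hD]
      by_cases h : p = q
      · subst h; simp
      · simp [h]
    rw [h1, hD]

open scoped ComplexOrder in
/-- The inequality for positive semidefinite matrices `c j` whose sum and barycentre are diagonal.
Writing `c j = Bⱼ* Bⱼ` and stacking the columns of the `Bⱼ` (Naimark dilation) turns it into
`hp_compress`. -/
lemma hp_matrix {J : Set ℝ} {f : ℝ → ℝ} (hcont : ContinuousOn f J)
    (hopconv : HPConvexOn.{u} J f)
    {ι κ : Type} [Fintype ι] [Fintype κ] [DecidableEq κ] (c : ι → Matrix κ κ ℂ)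
    (hc : ∀ j, (c j).PosSemidef) (lam : ι → ℝ) (hlam : ∀ j, lam j ∈ J) (s n : κ → ℝ)
    (hn : ∀ k l, ∑ j, c j k l = if k = l then (n k : ℂ) else 0)
    (hs : ∀ k l, ∑ j, lam j * c j k l = if k = l then ((s k * n k : ℝ) : ℂ) else 0) :
    ∑ k, f (s k) * n k ≤ ∑ j, f (lam j) * (∑ k, ∑ l, c j k l).re := by
  classical
  have hB : ∀ j, ∃ B : Matrix κ κ ℂ, c j = star B * B := by
    open scoped MatrixOrder Matrix.Norms.L2Operator in
    exact fun j => CStarAlgebra.nonneg_iff_eq_star_mul_self.1 (hc j).nonneg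
  choose B hB using hB
  have hcB : ∀ j k l, c j k l = ∑ m, star (B j m k) * B j m l := by
    intro j k l
    rw [hB, Matrix.star_eq_conjTranspose, Matrix.mul_apply]
    rfl
  obtain ⟨X, hXs, hXspec, hX, hfX⟩ := hp_diag (fun p : ULift.{u} (ι × κ) => lam p.down.1)
  let v : κ → EuclideanSpace ℂ (ULift.{u} (ι × κ)) := fun k =>
    WithLp.toLp 2 fun p => B p.down.1 p.down.2 k
  have hsum : ∀ F : ULift.{u} (ι × κ) → ℂ, ∑ p, F p = ∑ j, ∑ m, F ⟨(j, m)⟩ := by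
    intro F
    rw [← Fintype.sum_prod_type' (f := fun j m => F ⟨(j, m)⟩)]
    exact Equiv.ulift.sum_comp (fun q : ι × κ => F ⟨q⟩)
  have hinner : ∀ (Y : EuclideanSpace ℂ (ULift.{u} (ι × κ)) →L[ℂ]
      EuclideanSpace ℂ (ULift.{u} (ι × κ))) (r : ι → ℝ),
      (∀ w p, Y w p = r p.down.1 * w p) → ∀ k l, inner ℂ (v k) (Y (v l)) = ∑ j, r j * c j k l := by
    intro Y r hY k l
    rw [PiLp.inner_apply, hsum]
    refine Finset.sum_congr rfl fun j _ => ?_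
    rw [hcB, Finset.mul_sum]
    refine Finset.sum_congr rfl fun m _ => ?_
    rw [hY]
    simp only [v, RCLike.inner_apply]
    simp
    ring
  have h := hp_compress hcont hopconv hXs (by
      intro t ht
      obtain ⟨p, rfl⟩ := hXspec t ht
      exact hlam _) v s n (by
      intro k l
      rw [← hn k l]
      have := hinner 1 (fun _ => 1) (by simp) k l
      simpa using this) (by
      intro k l
      rw [← hs k l]
      exact hinner X lam hX k l)
  refine h.trans_eq ?_
  rw [ContinuousLinearMap.reApplyInnerSelf, ← inner_conj_symm, RCLike.conj_re, map_sum, sum_inner]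
  simp_rw [inner_sum, hinner (cfc f X) (fun j => f (lam j)) (hfX f)]
  have h1 : ∑ k, ∑ l, ∑ j, (f (lam j) : ℂ) * c j k l = ∑ j, (f (lam j) : ℂ) * ∑ k, ∑ l, c j k l := by
    simp_rw [Finset.mul_sum]
    rw [Finset.sum_comm (s := Finset.univ (α := ι))]
    exact Finset.sum_congr rfl fun k _ => Finset.sum_comm
  rw [h1, map_sum]
  simp

/-! ### Negative values of the function force continuity -/

/-- For an orthonormal family `e (θ, i)` with `i` ranging over two values, an operator with spectrum
in `{a, b}` whose `b`-eigenspace contains, in each plane indexed by `θ`, the line rotated by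
the angle `α θ` from `e (θ, false)`. It is `a + (b - a) P` for a projection `P`. -/
lemma hp_rotated {E : Type*} [NormedAddCommGroup E] [InnerProductSpace ℂ E] [CompleteSpace E]
    {e : ℝ × Bool → E} (he : Orthonormal ℂ e) (α : ℝ → ℝ) (hα : α 0 = 0) (a b : ℝ) :
    ∃ A : E →L[ℂ] E, IsSelfAdjoint A ∧ spectrum ℝ A ⊆ {a, b} ∧
      A (e (0, false)) = b • e (0, false) ∧
      ∀ θ, A (e (θ, false)) = (a + (b - a) * Real.cos (α θ) ^ 2) • e (θ, false) +
        ((b - a) * (Real.cos (α θ) * Real.sin (α θ))) • e (θ, true) := by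
  have hee : ∀ i j, inner ℂ (e i) (e j) = if i = j then (1 : ℂ) else 0 := by
    classical
    exact orthonormal_iff_ite.1 he
  let u : ℝ → E := fun θ => Real.cos (α θ) • e (θ, false) + Real.sin (α θ) • e (θ, true)
  let w : ℝ → E := fun θ => -Real.sin (α θ) • e (θ, false) + Real.cos (α θ) • e (θ, true)
  set W : Submodule ℂ E := Submodule.span ℂ (Set.range w) with hW
  have hsm : ∀ {V : Submodule ℂ E} (r : ℝ) {x : E}, x ∈ V → r • x ∈ V := by
    intro V r x hx
    rw [← Complex.coe_smul]
    exact V.smul_mem _ hx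
  have hu : ∀ θ, u θ ∈ Wᗮ := by
    intro θ
    rw [Submodule.mem_orthogonal]
    intro x hx
    induction hx using Submodule.span_induction with
    | mem x hx =>
      obtain ⟨φ, rfl⟩ := hx
      simp only [w, u, inner_add_left, inner_add_right, ← Complex.coe_smul, inner_smul_left,
        inner_smul_right, hee]
      rcases eq_or_ne φ θ with h | h
      · subst h; simp [-Complex.ofReal_cos, -Complex.ofReal_sin]; ring
      · simp [h]
    | zero => simp
    | add x y _ _ hx hy => rw [inner_add_left, hx, hy, add_zero]
    | smul a x _ hx => rw [inner_smul_left, hx, mul_zero]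
  set P : E →L[ℂ] E := Wᗮ.starProjection with hP
  have hPs : IsSelfAdjoint P := isSelfAdjoint_starProjection _
  have hPe : ∀ θ, P (e (θ, false)) = Real.cos (α θ) • u θ := by
    intro θ
    refine Submodule.eq_starProjection_of_mem_orthogonal (hsm _ (hu θ)) ?_
    have h1 : e (θ, false) - Real.cos (α θ) • u θ = (-Real.sin (α θ)) • w θ := by
      have := Real.sin_sq_add_cos_sq (α θ)
      have h2 : e (θ, false) = (Real.sin (α θ) ^ 2 + Real.cos (α θ) ^ 2) • e (θ, false) := by
        rw [this, one_smul]
      nth_rewrite 1 [h2]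
      simp only [u, w]
      module
    rw [h1]
    exact Submodule.le_orthogonal_orthogonal _ (hsm _ (Submodule.subset_span ⟨θ, rfl⟩))
  have hcfc : cfc (fun t : ℝ => a + (b - a) * t) P = a • (1 : E →L[ℂ] E) + (b - a) • P := by
    rw [cfc_const_add a _ P, cfc_const_mul (b - a) _ P, cfc_id' ℝ P,
      Algebra.algebraMap_eq_smul_one]
  have hA : ∀ θ, (a • (1 : E →L[ℂ] E) + (b - a) • P) (e (θ, false)) =
      (a + (b - a) * Real.cos (α θ) ^ 2) • e (θ, false) +
        ((b - a) * (Real.cos (α θ) * Real.sin (α θ))) • e (θ, true) := by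
    intro θ
    simp only [add_apply, smul_apply, one_apply_eq_self, hPe, u]
    module
  refine ⟨a • (1 : E →L[ℂ] E) + (b - a) • P, hcfc ▸ cfc_predicate _ _, ?_, ?_, hA⟩
  · rw [← hcfc, cfc_map_spectrum (fun t : ℝ => a + (b - a) * t) P]
    rintro _ ⟨t, ht, rfl⟩
    have := (Submodule.isIdempotentElem_starProjection Wᗮ).spectrum_subset ℝ ht
    rcases this with rfl | h
    · simp
    · rw [Set.mem_singleton_iff.1 h]; simp
  · rw [hA, hα]
    simp

/-- In every universe there is a Hilbert space with an orthonormal family indexed by `ℝ × Bool`. -/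
lemma hp_exists_orthonormal : ∃ (E : Type u) (_ : NormedAddCommGroup E)
    (_ : InnerProductSpace ℂ E) (_ : CompleteSpace E) (e : ℝ × Bool → E), Orthonormal ℂ e := by
  classical
  refine ⟨lp (fun _ : ULift.{u} (ℝ × Bool) => ℂ) 2, inferInstance, inferInstance, inferInstance,
    fun p => lp.single 2 ⟨p⟩ 1, ?_⟩
  rw [orthonormal_iff_ite]
  intro i j
  rw [lp.inner_single_left]
  by_cases h : i = j
  · subst h; simp
  · have : (ULift.up i : ULift.{u} (ℝ × Bool)) ≠ ULift.up j := fun h' => h (ULift.up_injective h')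
    simp [h, this]

/-- If `f b < 0`, then `f` is continuous on the whole segment from `a` to `b`, although only `a` and
`b` are assumed to lie in `J`. Otherwise, average two operators with spectra in `{a, b}` whose
eigenlines are rotated by `θ` and `-θ`, over all angles at once: the average has spectrum containing
the segment, so its `cfc` is the default value `0`, while the right-hand side of the convexity
inequality is negative at `e (0, false)`. -/
lemma hp_continuousOn_of_neg {J : Set ℝ} {f : ℝ → ℝ}
    (hopconv : HPConvexOn.{u} J f)
    {a b : ℝ} (ha : a ∈ J) (hb : b ∈ J) (hfb : f b < 0) : ContinuousOn f (Set.uIcc a b) := by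
  by_contra hcon
  have hJ : ({a, b} : Set ℝ) ⊆ J := by
    rintro t (rfl | rfl)
    exacts [ha, hb]
  obtain ⟨E, _, _, _, e, he⟩ := hp_exists_orthonormal.{u}
  obtain ⟨A, hA, hAs, hA0, hAe⟩ := hp_rotated he (fun θ => θ) rfl a b
  obtain ⟨B, hB, hBs, hB0, hBe⟩ := hp_rotated he (fun θ => -θ) neg_zero a b
  have hconv := hopconv E A B hA hB (hAs.trans hJ) (hBs.trans hJ) (1 / 2) (by norm_num)
    (by norm_num)
  set M : E →L[ℂ] E := (1 - 1 / 2 : ℝ) • A + (1 / 2 : ℝ) • B with hM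
  have hMe : ∀ θ, M (e (θ, false)) = (a + (b - a) * Real.cos θ ^ 2) • e (θ, false) := by
    intro θ
    simp only [hM, add_apply, smul_apply, hAe, hBe, Real.cos_neg, Real.sin_neg]
    module
  have hsub : Set.uIcc a b ⊆ spectrum ℝ M := by
    intro t ht
    rw [← segment_eq_uIcc] at ht
    obtain ⟨x, y, hx, hy, hxy, rfl⟩ := ht
    have h1 : a + (b - a) * Real.cos (Real.arccos (√y)) ^ 2 = x • a + y • b := by
      rw [Real.cos_arccos (by linarith [Real.sqrt_nonneg y]) (Real.sqrt_le_one.2 (by linarith)),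
        Real.sq_sqrt hy]
      simp only [smul_eq_mul]
      linear_combination (-a) * hxy
    rw [← h1]
    exact hp_mem_spectrum (hMe _) (he.ne_zero _)
  have hM0 : cfc f M = 0 := cfc_apply_of_not_continuousOn M fun h => hcon (h.mono hsub)
  have hfin : ∀ {s : Set ℝ}, s ⊆ {a, b} → ContinuousOn f s := fun h =>
    ((Set.toFinite {a, b}).subset h).continuousOn f
  have h1 := hp_quad_mono hconv (e (0, false))
  have hAf := hp_eig hA (hfin hAs) hA0
  have hBf := hp_eig hB (hfin hBs) hB0
  rw [hM0, hp_quad_add, hp_quad_smul, hp_quad_smul] at h1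
  simp only [ContinuousLinearMap.reApplyInnerSelf, hAf, hBf, ← Complex.coe_smul,
    inner_smul_left, inner_self_eq_norm_sq_to_K, he.1] at h1
  simp at h1
  linarith

/-! ### The inequality when the function is continuous on the spectrum of the sum -/

section
variable {K : Type*} [NormedAddCommGroup K] [InnerProductSpace ℂ K] [CompleteSpace K]

open scoped ComplexOrder in
/-- Compressing a positive operator to finitely many vectors gives a Gram matrix. -/
lemma hp_gram {C : K →L[ℂ] K} (hC : 0 ≤ C) {κ : Type} [Fintype κ] (y : κ → K) :
    (Matrix.of fun k l => inner ℂ (y k) (C (y l)) : Matrix κ κ ℂ).PosSemidef := by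
  obtain ⟨B, rfl⟩ := CStarAlgebra.nonneg_iff_eq_star_mul_self.1 hC
  have h : (Matrix.of fun k l => inner ℂ (y k) ((star B * B) (y l)) : Matrix κ κ ℂ) =
      Matrix.gram ℂ fun k => B (y k) := by
    ext k l
    simp [Matrix.gram_apply, ContinuousLinearMap.star_eq_adjoint,
      ContinuousLinearMap.adjoint_inner_right]
  rw [h]
  exact Matrix.posSemidef_gram ℂ _

/-- The perturbation step for one piece `y` of the decomposition. The mean `t` of `T` at `y`
lies in the window but need not lie in the spectrum, so `f t` is not controlled. Mixing in a mass `ε`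
at the endpoints `a`, `b`, with weights `1 - p` and `p`, shifts the mean to a point `s` which is an
endpoint of the window and hence in the spectrum. -/
lemma hp_adjust {T : K →L[ℂ] K} (hT : IsSelfAdjoint T) {f : ℝ → ℝ}
    (hf : ContinuousOn f (spectrum ℝ T)) {a b : ℝ} (hab : a ≤ b)
    (hTab : spectrum ℝ T ⊆ Set.Icc a b) {ε : ℝ} (hε : 0 < ε) {δ : ℝ}
    (hδb : a < b → δ ≤ ε * ((b - a) / 2))
    (hfδ : ∀ s ∈ spectrum ℝ T, ∀ t ∈ spectrum ℝ T, dist s t ≤ δ → dist (f s) (f t) ≤ ε)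
    {y : K} (hy : y ≠ 0 → ∃ lo ∈ spectrum ℝ T, ∃ hi ∈ spectrum ℝ T, lo ≤ hi ∧ hi - lo ≤ δ ∧
        ∀ g : ℝ → ℝ, ContinuousOn g (spectrum ℝ T) →
          (∀ t ∈ spectrum ℝ T, lo ≤ t → t ≤ hi → g t ≤ 0) →
          (cfc g T).reApplyInnerSelf y ≤ 0) :
    ∃ s p : ℝ, 0 ≤ p ∧ p ≤ 1 ∧ (cfc f T).reApplyInnerSelf y ≤ (f s + ε) * ‖y‖ ^ 2 ∧
      (1 - ε) * T.reApplyInnerSelf y + ε * ((1 - p) * a + p * b) * ‖y‖ ^ 2 = s * ‖y‖ ^ 2 := by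
  rcases eq_or_ne y 0 with rfl | h0
  · exact ⟨0, 0, le_rfl, zero_le_one, by simp [ContinuousLinearMap.reApplyInnerSelf],
      by simp [ContinuousLinearMap.reApplyInnerSelf]⟩
  obtain ⟨lo, hlo, hi, hhi, hle, hdiff, hwin⟩ := hy h0
  have hn : 0 < ‖y‖ ^ 2 := by positivity
  obtain ⟨t, ht⟩ : ∃ t, T.reApplyInnerSelf y = t * ‖y‖ ^ 2 :=
    ⟨T.reApplyInnerSelf y / ‖y‖ ^ 2, by field_simp⟩
  have hup : t ≤ hi := by
    have h := hwin (fun t => t - hi) (by fun_prop) (fun t _ _ h => by linarith)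
    rw [cfc_sub (fun t => t) (fun _ => hi) T, cfc_id' ℝ T, cfc_const _ T,
      Algebra.algebraMap_eq_smul_one, sub_eq_add_neg, ← neg_smul, hp_quad_add, hp_quad_smul,
      hp_quad_one, ht, ← add_mul] at h
    have := nonpos_of_mul_nonpos_left h hn
    linarith
  have hdn : lo ≤ t := by
    have h := hwin (fun t => lo - t) (by fun_prop) (fun t _ h _ => by linarith)
    rw [cfc_sub (fun _ => lo) (fun t => t) T, cfc_id' ℝ T, cfc_const _ T,
      Algebra.algebraMap_eq_smul_one, sub_eq_add_neg, ← neg_one_smul ℝ T, hp_quad_add,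
      hp_quad_smul, hp_quad_smul, hp_quad_one, ht] at h
    have h2 : (lo - t) * ‖y‖ ^ 2 ≤ 0 := by linarith
    have := nonpos_of_mul_nonpos_left h2 hn
    linarith
  have hfs : ∀ s ∈ spectrum ℝ T, lo ≤ s → s ≤ hi →
      (cfc f T).reApplyInnerSelf y ≤ (f s + ε) * ‖y‖ ^ 2 := by
    intro s hs h1 h2
    have h := hwin (fun t => f t - (f s + ε)) (by fun_prop) (fun t ht' h3 h4 => by
      have := hfδ t ht' s hs (by rw [Real.dist_eq, abs_le]; constructor <;> linarith)
      rw [Real.dist_eq] at this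
      linarith [(abs_le.1 this).2])
    rw [cfc_sub f (fun _ => f s + ε) T, cfc_const _ T,
      Algebra.algebraMap_eq_smul_one, sub_eq_add_neg, ← neg_smul, hp_quad_add, hp_quad_smul,
      hp_quad_one] at h
    linarith
  have hlo' := hTab hlo
  have hhi' := hTab hhi
  -- move `t` to the endpoint of the window pointing towards the centre of `[a, b]`
  obtain ⟨s, hs, hs1, hs2, hsd⟩ : ∃ s ∈ spectrum ℝ T, lo ≤ s ∧ s ≤ hi ∧
      t + (s - t) / ε ∈ Set.Icc a b := by
    rcases hab.eq_or_lt with h | h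
    · refine ⟨lo, hlo, le_rfl, hle, ?_⟩
      have h1 : lo = a := le_antisymm (hlo'.2.trans h.ge) hlo'.1
      have h2 : hi = a := le_antisymm (hhi'.2.trans h.ge) hhi'.1
      have h3 : t = lo := by linarith
      rw [h3, sub_self, zero_div, add_zero]
      exact hlo'
    · have hδ := hδb h
      have hq : ∀ r, r ≤ δ → r / ε ≤ (b - a) / 2 := by
        intro r hr
        rw [div_le_iff₀ hε]
        linarith
      rcases le_total t ((a + b) / 2) with hc | hc
      · refine ⟨hi, hhi, hle, le_rfl, ?_, ?_⟩
        · have : 0 ≤ (hi - t) / ε := div_nonneg (by linarith) hε.le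
          linarith [hlo'.1]
        · linarith [hq (hi - t) (by linarith)]
      · refine ⟨lo, hlo, le_rfl, hle, ?_, ?_⟩
        · have h1 := hq (t - lo) (by linarith)
          have h2 : (lo - t) / ε = -((t - lo) / ε) := by ring
          linarith
        · have : 0 ≤ (t - lo) / ε := div_nonneg (by linarith) hε.le
          have h2 : (lo - t) / ε = -((t - lo) / ε) := by ring
          linarith [hhi'.2]
  rw [← segment_eq_Icc hab] at hsd
  obtain ⟨q, p, hq, hp, hqp, hd⟩ := hsd
  refine ⟨s, p, hp, by linarith, hfs s hs hs1 hs2, ?_⟩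
  obtain rfl : q = 1 - p := by linarith
  simp only [smul_eq_mul] at hd
  rw [hd, ht]
  field_simp
  ring

/-- The inequality for the discrete data `C j`, `lam j`, at a fixed vector and up to an error of
order `ε`: `hp_matrix` is applied to the matrices `⟨y k, C j y l⟩`, scaled by `1 - ε`, together with
two diagonal matrices carrying the endpoint masses from `hp_adjust`. -/
lemma hp_estimate {J : Set ℝ} {f : ℝ → ℝ} (hcont : ContinuousOn f J)
    (hopconv : HPConvexOn.{u} J f)
    {T : K →L[ℂ] K} (hT : IsSelfAdjoint T) (hf : ContinuousOn f (spectrum ℝ T)) {a b : ℝ}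
    (haJ : a ∈ J) (hbJ : b ∈ J) (hab : a ≤ b) (hTab : spectrum ℝ T ⊆ Set.Icc a b)
    {ι : Type} [Fintype ι] (lam : ι → ℝ) (hlam : ∀ j, lam j ∈ J) (C : ι → K →L[ℂ] K)
    (hC : ∀ j, 0 ≤ C j) (hC1 : ∑ j, C j = 1) (hCT : ∑ j, lam j • C j = T)
    (x : K) {ε : ℝ} (hε : 0 < ε) (hε1 : ε < 1) :
    (cfc f T).reApplyInnerSelf x ≤ ε * ‖x‖ ^ 2 +
      (1 - ε) * (∑ j, f (lam j) • C j).reApplyInnerSelf x + ε * (|f a| + |f b|) * ‖x‖ ^ 2 := by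
  obtain ⟨δ₀, hδ₀, hfδ⟩ := Metric.uniformContinuousOn_iff_le.1
    ((ContinuousFunctionalCalculus.isCompact_spectrum T).uniformContinuousOn_of_continuous hf) ε hε
  obtain ⟨δ, hδ, hδδ₀, hδb⟩ : ∃ δ > 0, δ ≤ δ₀ ∧ (a < b → δ ≤ ε * ((b - a) / 2)) := by
    by_cases h : a < b
    · exact ⟨min δ₀ (ε * ((b - a) / 2)), lt_min hδ₀ (mul_pos hε (by linarith)), min_le_left _ _,
        fun _ => min_le_right _ _⟩
    · exact ⟨δ₀, hδ₀, le_rfl, fun h' => absurd h' h⟩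
  obtain ⟨N, y, hyx, hyo, hyw⟩ := hp_decomp hT x hδ
  choose s p hp0 hp1 hfs hmean using fun k => hp_adjust hT hf hab hTab hε hδb
    (fun s hs t ht h => hfδ s hs t ht (h.trans hδδ₀)) (hyw k)
  have hsum : ∀ g : ℝ → ℝ, (cfc g T).reApplyInnerSelf x =
      ∑ k, (cfc g T).reApplyInnerSelf (y k) := by
    intro g
    rw [← hyx]
    exact hp_quad_sum fun k l h => hyo k l h g
  have hnorm : ‖x‖ ^ 2 = ∑ k, ‖y k‖ ^ 2 := by
    have := hsum fun _ => 1
    rw [cfc_const_one ℝ T] at this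
    simpa only [hp_quad_one] using this
  have horth : ∀ k l, inner ℂ (y k) (y l) = if k = l then ((‖y k‖ ^ 2 : ℝ) : ℂ) else 0 := by
    intro k l
    split_ifs with h
    · subst h
      rw [inner_self_eq_norm_sq_to_K]
      simp
    · have := hyo k l h fun _ => 1
      rwa [cfc_const_one ℝ T] at this
  have horthT : ∀ k l, inner ℂ (y k) (T (y l)) =
      if k = l then (T.reApplyInnerSelf (y k) : ℂ) else 0 := by
    intro k l
    split_ifs with h
    · subst h
      have h1 : inner ℂ (T (y k)) (y k) = inner ℂ (y k) (T (y k)) := by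
        rw [← ContinuousLinearMap.adjoint_inner_right, hT.adjoint_eq]
      have h2 : (starRingEnd ℂ) (inner ℂ (y k) (T (y k))) = inner ℂ (y k) (T (y k)) := by
        rw [inner_conj_symm, h1]
      rw [ContinuousLinearMap.reApplyInnerSelf, h1]
      exact (Complex.conj_eq_iff_re.1 h2).symm
    · have := hyo k l h fun t => t
      rwa [cfc_id' ℝ T] at this
  have hε0 : 0 ≤ 1 - ε := by linarith
  -- the masses placed at the endpoints `a` (index `false`) and `b` (index `true`)
  let m : Bool → Fin N → ℝ := fun β k => ε * ‖y k‖ ^ 2 * (if β then p k else 1 - p k)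
  let c : ι ⊕ Bool → Matrix (Fin N) (Fin N) ℂ := Sum.elim
    (fun j => (1 - ε) • Matrix.of fun k l => inner ℂ (y k) (C j (y l)))
    (fun β => Matrix.diagonal fun k => (m β k : ℂ))
  have hCsum : ∀ (r : ι → ℝ) k l, ∑ j, (r j : ℂ) * inner ℂ (y k) (C j (y l)) =
      inner ℂ (y k) ((∑ j, r j • C j) (y l)) := by
    intro r k l
    rw [sum_apply, inner_sum]
    refine Finset.sum_congr rfl fun j _ => ?_
    rw [smul_apply, ← Complex.coe_smul, inner_smul_right]
  have hcsum : ∀ (r : ι ⊕ Bool → ℝ) k l, ∑ j, (r j : ℂ) * c j k l =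
      (1 - ε) * inner ℂ (y k) ((∑ j, r (Sum.inl j) • C j) (y l)) +
        if k = l then ((r (Sum.inr false) * m false k + r (Sum.inr true) * m true k : ℝ) : ℂ)
          else 0 := by
    intro r k l
    rw [Fintype.sum_sum_type, ← hCsum, Finset.mul_sum]
    congr 1
    · refine Finset.sum_congr rfl fun j _ => ?_
      simp [c]
      ring
    · simp only [c, Sum.elim_inr, Fintype.sum_bool, Matrix.diagonal_apply]
      split_ifs <;> simp
      ring
  have key := hp_matrix hcont hopconv c (by
      open scoped ComplexOrder in
      rintro (j | β)
      · exact (hp_gram (hC j) y).smul hε0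
      · refine Matrix.PosSemidef.diagonal fun k => ?_
        have : 0 ≤ m β k := by
          refine mul_nonneg (by positivity) ?_
          cases β
          · simpa using hp1 k
          · simpa using hp0 k
        simpa using this) (Sum.elim lam fun β => if β then b else a) (by
      rintro (j | β)
      · exact hlam j
      · cases β
        · exact haJ
        · exact hbJ) s (fun k => ‖y k‖ ^ 2) (by
      intro k l
      have h := hcsum (fun _ => 1) k l
      simp only [Complex.ofReal_one, one_mul, one_smul] at h
      rw [h, hC1, one_apply_eq_self, horth]
      split_ifs
      · simp [m]
        ring
      · simp) (by
      intro k l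
      have h := hcsum (Sum.elim lam fun β => if β then b else a) k l
      simp only [Sum.elim_inl, hCT, horthT] at h
      rw [h]
      split_ifs
      · rw [← hmean k]
        simp [m]
        ring
      · simp)
  have htot : ∑ j, f (Sum.elim lam (fun β => if β then b else a) j) *
      (∑ k, ∑ l, c j k l).re = (1 - ε) * (∑ j, f (lam j) • C j).reApplyInnerSelf x +
        ∑ k, (f a * m false k + f b * m true k) := by
    have h1 : (∑ j, (f (Sum.elim lam (fun β => if β then b else a) j) : ℂ) *
        ∑ k, ∑ l, c j k l) = ∑ k, ∑ l, ∑ j,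
          (f (Sum.elim lam (fun β => if β then b else a) j) : ℂ) * c j k l := by
      simp_rw [Finset.mul_sum]
      rw [Finset.sum_comm]
      exact Finset.sum_congr rfl fun k _ => Finset.sum_comm
    have h2 := congrArg Complex.re h1
    simp_rw [hcsum (fun j => f (Sum.elim lam (fun β => if β then b else a) j))] at h2
    rw [Complex.re_sum] at h2
    simp_rw [Complex.re_ofReal_mul] at h2
    rw [h2, ContinuousLinearMap.reApplyInnerSelf, ← inner_conj_symm, RCLike.conj_re, ← hyx]
    simp_rw [Finset.sum_add_distrib]
    rw [Complex.add_re]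
    congr 1
    · simp_rw [← Finset.mul_sum, ← inner_sum, ← map_sum, ← sum_inner]
      rw [← Complex.ofReal_one, ← Complex.ofReal_sub, Complex.re_ofReal_mul]
      rfl
    · simp_rw [Finset.sum_ite_eq, Finset.mem_univ, if_true]
      rw [← Complex.ofReal_sum, Complex.ofReal_re]
      exact Finset.sum_add_distrib
  have hend : ∑ k, (f a * m false k + f b * m true k) ≤ ε * (|f a| + |f b|) * ‖x‖ ^ 2 := by
    rw [hnorm, Finset.mul_sum]
    refine Finset.sum_le_sum fun k _ => ?_
    have h1 : f a * (1 - p k) + f b * p k ≤ |f a| + |f b| := by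
      have h2 : f a * (1 - p k) ≤ |f a| := (mul_le_mul_of_nonneg_right (le_abs_self _)
        (by linarith [hp1 k])).trans (mul_le_of_le_one_right (abs_nonneg _) (by linarith [hp0 k]))
      have h3 : f b * p k ≤ |f b| := (mul_le_mul_of_nonneg_right (le_abs_self _)
        (hp0 k)).trans (mul_le_of_le_one_right (abs_nonneg _) (hp1 k))
      linarith
    have h4 := mul_le_mul_of_nonneg_left h1 (show 0 ≤ ε * ‖y k‖ ^ 2 by positivity)
    simp only [m, if_true, Bool.false_eq_true, if_false]
    linarith
  calc (cfc f T).reApplyInnerSelf x ≤ ∑ k, (f (s k) + ε) * ‖y k‖ ^ 2 := by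
        rw [hsum]
        exact Finset.sum_le_sum fun k _ => hfs k
    _ = ε * ‖x‖ ^ 2 + ∑ k, f (s k) * ‖y k‖ ^ 2 := by
        simp_rw [add_mul]
        rw [Finset.sum_add_distrib, ← Finset.mul_sum, ← hnorm, add_comm]
    _ ≤ _ := by
        rw [htot] at key
        linarith
end

lemma hp_isSelfAdjoint_map {H K : Type*} [NormedAddCommGroup H] [InnerProductSpace ℂ H]
    [CompleteSpace H] [NormedAddCommGroup K] [InnerProductSpace ℂ K] [CompleteSpace K]
    (Ψ : (H →L[ℂ] H) →ₗ[ℂ] (K →L[ℂ] K)) (hΨ : ∀ T : H →L[ℂ] H, 0 ≤ T → 0 ≤ Ψ T)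
    {X : H →L[ℂ] H} (hX : IsSelfAdjoint X) : IsSelfAdjoint (Ψ X) := by
  have h1 : -algebraMap ℝ (H →L[ℂ] H) ‖X‖ ≤ X := hX.neg_algebraMap_norm_le_self
  have h2 : IsSelfAdjoint (Ψ (X + ‖X‖ • 1)) := by
    refine IsSelfAdjoint.of_nonneg (hΨ _ ?_)
    rw [Algebra.algebraMap_eq_smul_one] at h1
    exact neg_le_iff_add_nonneg.1 h1
  have h3 : IsSelfAdjoint (‖X‖ • Ψ 1) :=
    (IsSelfAdjoint.all ‖X‖).smul (IsSelfAdjoint.of_nonneg (hΨ 1 zero_le_one))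
  have h4 : Ψ X = Ψ (X + ‖X‖ • 1) - ‖X‖ • Ψ 1 := by
    rw [map_add, LinearMap.map_smul_of_tower, add_sub_cancel_right]
  rw [h4]
  exact h2.sub h3

/-! ### Conclusion -/

/-- **Hansen–Pedersen inequality.** If `f` is a continuous operator convex function on an
interval `J`, `Φ₁, …, Φₙ` are positive linear maps with `Σ Φᵢ(1) = 1`, and `A₁, …, Aₙ` are
self-adjoint with spectra in `J`, then `f(Σ Φᵢ(Aᵢ)) ≤ Σ Φᵢ(f(Aᵢ))`. Operator convexity is
phrased over all complex Hilbert spaces (in a fixed universe). -/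
theorem stmt_18
    {H K : Type*} [NormedAddCommGroup H] [InnerProductSpace ℂ H] [CompleteSpace H]
    [NormedAddCommGroup K] [InnerProductSpace ℂ K] [CompleteSpace K]
    (J : Set ℝ) (f : ℝ → ℝ) (hcont : ContinuousOn f J)
    (hopconv : ∀ (E : Type u) [NormedAddCommGroup E] [InnerProductSpace ℂ E] [CompleteSpace E],
      ∀ A B : E →L[ℂ] E, IsSelfAdjoint A → IsSelfAdjoint B →
        spectrum ℝ A ⊆ J → spectrum ℝ B ⊆ J → ∀ v : ℝ, 0 < v → v < 1 →
          cfc f ((1 - v) • A + v • B) ≤ (1 - v) • cfc f A + v • cfc f B)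
    (n : ℕ) (Φ : Fin n → (H →L[ℂ] H) →ₗ[ℂ] (K →L[ℂ] K))
    (hΦpos : ∀ i, ∀ T : H →L[ℂ] H, 0 ≤ T → 0 ≤ Φ i T)
    (hΦunital : ∑ i, Φ i 1 = 1)
    (A : Fin n → H →L[ℂ] H)
    (hA : ∀ i, IsSelfAdjoint (A i))
    (hAspec : ∀ i, spectrum ℝ (A i) ⊆ J) :
    cfc f (∑ i, Φ i (A i)) ≤ ∑ i, Φ i (cfc f (A i)) := by
  rcases subsingleton_or_nontrivial K with hK | hK
  · exact le_of_eq (Subsingleton.elim _ _)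
  set S : Set ℝ := ⋃ i, spectrum ℝ (A i) with hS
  have hAS : ∀ i, spectrum ℝ (A i) ⊆ S := fun i => Set.subset_iUnion (fun i => spectrum ℝ (A i)) i
  have hSJ : S ⊆ J := Set.iUnion_subset hAspec
  have hSc : IsCompact S :=
    isCompact_iUnion fun i => ContinuousFunctionalCalculus.isCompact_spectrum (A i)
  have hSne : S.Nonempty := by
    by_contra hcon
    rw [Set.not_nonempty_iff_eq_empty] at hcon
    have h1 : ∀ i, Φ i 1 = 0 := by
      intro i
      rcases subsingleton_or_nontrivial H with hH | hH
      · rw [Subsingleton.elim (1 : H →L[ℂ] H) 0, map_zero]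
      · obtain ⟨t, ht⟩ := ContinuousFunctionalCalculus.spectrum_nonempty (R := ℝ) (A i) (hA i)
        have := hAS i ht
        rw [hcon] at this
        exact this.elim
    simp only [h1, Finset.sum_const_zero] at hΦunital
    exact zero_ne_one hΦunital
  obtain ⟨a, haS, ha⟩ := hSc.exists_isLeast hSne
  obtain ⟨b, hbS, hb⟩ := hSc.exists_isGreatest hSne
  have hab : a ≤ b := ha hbS
  set T : K →L[ℂ] K := ∑ i, Φ i (A i) with hT
  have hmono : ∀ i, ∀ X Y : H →L[ℂ] H, X ≤ Y → Φ i X ≤ Φ i Y := by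
    intro i X Y h
    have := hΦpos i (Y - X) (sub_nonneg.2 h)
    rwa [map_sub, sub_nonneg] at this
  have hconst : ∀ r : ℝ, algebraMap ℝ (K →L[ℂ] K) r =
      ∑ i, Φ i (algebraMap ℝ (H →L[ℂ] H) r) := by
    intro r
    simp only [Algebra.algebraMap_eq_smul_one, LinearMap.map_smul_of_tower]
    rw [← Finset.smul_sum, hΦunital]
  have hTsa : IsSelfAdjoint T :=
    isSelfAdjoint_sum _ fun i _ => hp_isSelfAdjoint_map (Φ i) (hΦpos i) (hA i)
  have hTab : spectrum ℝ T ⊆ Set.Icc a b := by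
    have h1 : algebraMap ℝ (K →L[ℂ] K) a ≤ T := by
      rw [hconst]
      exact Finset.sum_le_sum fun i _ => hmono i _ _
        ((algebraMap_le_iff_le_spectrum (hA i)).2 fun t ht => ha (hAS i ht))
    have h2 : T ≤ algebraMap ℝ (K →L[ℂ] K) b := by
      rw [hconst]
      exact Finset.sum_le_sum fun i _ => hmono i _ _
        ((le_algebraMap_iff_spectrum_le (hA i)).2 fun t ht => hb (hAS i ht))
    exact fun t ht => ⟨(algebraMap_le_iff_le_spectrum hTsa).1 h1 t ht,
      (le_algebraMap_iff_spectrum_le hTsa).1 h2 t ht⟩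
  by_cases hf : ContinuousOn f (spectrum ℝ T)
  · have hRsa : IsSelfAdjoint (∑ i, Φ i (cfc f (A i))) :=
      isSelfAdjoint_sum _ fun i _ => hp_isSelfAdjoint_map (Φ i) (hΦpos i) (cfc_predicate _ _)
    refine hp_le_of_quad (cfc_predicate _ _) hRsa fun x => ?_
    set R := (∑ i, Φ i (cfc f (A i))).reApplyInnerSelf x with hR
    set D : ℝ := (2 + |f a| + |f b|) * ‖x‖ ^ 2 + |R| with hD
    have hest : ∀ ε : ℝ, 0 < ε → ε < 1 → (cfc f T).reApplyInnerSelf x ≤ R + ε * D := by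
      intro ε hε hε1
      obtain ⟨ι, _, lam, C, hlam, hC, hC1, hCT, hCf⟩ :=
        hp_povm Φ hΦpos hΦunital A hA hSc hAS (hcont.mono hSJ) hε
      have h1 := hp_estimate hcont hopconv hTsa hf (hSJ haS) (hSJ hbS) hab hTab lam
        (fun j => hSJ (hlam j)) C hC hC1 hCT x hε hε1
      have h2 := hp_quad_mono hCf x
      rw [hp_quad_add, hp_quad_smul, hp_quad_one, ← hR] at h2
      have h3 := mul_le_mul_of_nonneg_left h2 (show 0 ≤ 1 - ε by linarith)
      have h4 : 0 ≤ ε * ε * ‖x‖ ^ 2 := by positivity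
      have h5 : -(ε * R) ≤ ε * |R| := by
        rw [← mul_neg]
        exact mul_le_mul_of_nonneg_left (neg_le_abs R) hε.le
      rw [hD]
      linarith
    have hlim : Filter.Tendsto (fun ε : ℝ => R + ε * D) (nhdsWithin 0 (Set.Ioi 0)) (nhds R) := by
      have : Filter.Tendsto (fun ε : ℝ => R + ε * D) (nhds 0) (nhds (R + 0 * D)) :=
        (by fun_prop : Continuous fun ε : ℝ => R + ε * D).tendsto 0
      rw [zero_mul, add_zero] at this
      exact this.mono_left nhdsWithin_le_nhds
    refine ge_of_tendsto hlim ?_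
    filter_upwards [Ioo_mem_nhdsGT (zero_lt_one (α := ℝ))] with ε hε
    exact hest ε hε.1 hε.2
  · -- here `cfc f T` takes the default value `0`, and `f` cannot be negative on the spectra
    rw [cfc_apply_of_not_continuousOn T hf]
    refine Finset.sum_nonneg fun i _ => hΦpos i _ (cfc_nonneg fun t ht => ?_)
    by_contra hneg
    have htS := hAS i ht
    have hat := ha htS
    have htb := hb htS
    have h1 := hp_continuousOn_of_neg hopconv (hSJ haS) (hSJ htS) (not_le.1 hneg)
    have h2 := hp_continuousOn_of_neg hopconv (hSJ hbS) (hSJ htS) (not_le.1 hneg)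
    rw [Set.uIcc_of_le hat] at h1
    rw [Set.uIcc_of_ge htb] at h2
    refine hf (ContinuousOn.mono ?_ hTab)
    rw [← Set.Icc_union_Icc_eq_Icc hat htb]
    exact h1.union_of_isClosed h2 isClosed_Icc isClosed_Icc
end
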